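/- For every nonnegative integer n, the number sT(5n+3) of partition pairs (π₁,π₂) ∈ 𝒮𝒯 with |π₁|+|π₂| = 5n+3 is divisible by 5. -/

import Mathlib

open scoped BigOperators

noncomputable section

/-- A partition is a finite multiset of positive integers. -/
def IsPartition (π : Multiset ℕ) : Prop := ∀ x ∈ π, 0 < x

/-- The smallest part of a partition, with the convention `s(∅) = ∞`. -/
def sPart (π : Multiset ℕ) : ℕ∞ := (π.map (fun x => (x : ℕ∞))).inf

/-- The largest part of a partition, with the convention `ℓ(∅) = 0`. -/
def lPart (π : Multiset ℕ) : ℕ := π.sup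

/-- Membership in the set 𝒮𝒯 of partition pairs: π₁ is nonempty,
`s(π₁) ≤ s(π₂)`, and `ℓ(π₂) < 2·s(π₁)`. -/
def InST (p : Multiset ℕ × Multiset ℕ) : Prop :=
  IsPartition p.1 ∧ IsPartition p.2 ∧ p.1 ≠ 0 ∧
    sPart p.1 ≤ sPart p.2 ∧ (lPart p.2 : ℕ∞) < 2 * sPart p.1

/-- `sT n` is the number of pairs `(π₁, π₂) ∈ 𝒮𝒯` with `|π₁| + |π₂| = n`. -/
def sT (n : ℕ) : ℕ :=
  {p : Multiset ℕ × Multiset ℕ | InST p ∧ p.1.sum + p.2.sum = n}.ncard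

open PowerSeries

/-! part Base -/

abbrev FF := ZMod 5

instance fact5 : Fact (Nat.Prime 5) := ⟨by norm_num⟩

/-- transfer of finsums along a partial involution -/
theorem finsum_invol {ι : Type*} (σ : ι → ι) (P : ι → Prop) (f g : ι → FF)
    (h1 : ∀ x, P x → P (σ x)) (h2 : ∀ x, P x → σ (σ x) = x)
    (h3 : ∀ x, P x → f (σ x) = g x) (hf : ∀ x, f x ≠ 0 → P x) (hg : ∀ x, g x ≠ 0 → P x) :
    ∑ᶠ x, f x = ∑ᶠ x, g x := by
  classical
  let τ : ι → ι := fun x => if P x then σ x else x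
  have hτ : Function.Involutive τ := by
    intro x
    by_cases hx : P x
    · simp [τ, hx, h1 x hx, h2 x hx]
    · simp [τ, hx]
  have : ∀ x, f (τ x) = g x := by
    intro x
    by_cases hx : P x
    · simp [τ, hx, h3 x hx]
    · have a : f x = 0 := by by_contra h; exact hx (hf x h)
      have b : g x = 0 := by by_contra h; exact hx (hg x h)
      simp [τ, hx, a, b]
  rw [← finsum_comp_equiv (hτ.toPerm τ)]
  exact finsum_congr this

theorem finite_invol {ι : Type*} (σ : ι → ι) (P : ι → Prop) (f g : ι → FF)
    (h2 : ∀ x, P x → σ (σ x) = x)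
    (h3 : ∀ x, P x → f (σ x) = g x) (hg : ∀ x, g x ≠ 0 → P x)
    (hfin : (Function.support f).Finite) : (Function.support g).Finite := by
  refine (hfin.image σ).subset ?_
  intro x hx
  have hP := hg x hx
  refine ⟨σ x, ?_, h2 x hP⟩
  rw [Function.mem_support, h3 x hP]
  exact hx

theorem FF_two_mul {a : FF} (h : 2 * a = 0) : a = 0 := by
  revert h; revert a; decide

theorem FF_eq_neg {a : FF} (h : a = -a) : a = 0 := by
  revert h; revert a; decide

theorem finsum_invol_neg {ι : Type*} (σ : ι → ι) (P : ι → Prop) (f : ι → FF)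
    (h1 : ∀ x, P x → P (σ x)) (h2 : ∀ x, P x → σ (σ x) = x)
    (h3 : ∀ x, P x → f (σ x) = - f x) (hf : ∀ x, f x ≠ 0 → P x) :
    ∑ᶠ x, f x = 0 := by
  have := finsum_invol σ P f (fun x => - f x) h1 h2 h3 hf (fun x hx => hf x (by simpa using hx))
  rw [finsum_neg_distrib] at this
  exact FF_eq_neg this

/-- generating series -/
def gs {ι : Type*} (E : ι → ℤ) (w : ι → FF) : FF⟦X⟧ :=
  PowerSeries.mk fun n => ∑ᶠ i, if E i = (n : ℤ) then w i else 0

def Adm {ι : Type*} (E : ι → ℤ) (w : ι → FF) : Prop :=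
  (∀ N : ℕ, {i | E i ≤ N ∧ w i ≠ 0}.Finite) ∧ ∀ i, w i ≠ 0 → 0 ≤ E i

theorem coeff_gs {ι : Type*} (E : ι → ℤ) (w : ι → FF) (n : ℕ) :
    coeff n (gs E w) = ∑ᶠ i, if E i = (n : ℤ) then w i else 0 := by
  simp [gs]

theorem Adm.fin {ι : Type*} {E : ι → ℤ} {w : ι → FF} (h : Adm E w) (n : ℕ) :
    (Function.support fun i => if E i = (n : ℤ) then w i else 0).Finite := by
  refine (h.1 n).subset ?_
  intro i hi
  simp only [Function.mem_support, ne_eq, ite_eq_right_iff, Classical.not_imp] at hi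
  exact ⟨hi.1.le, hi.2⟩

theorem Adm.mul {ι κ : Type*} {E : ι → ℤ} {w : ι → FF} {E' : κ → ℤ} {w' : κ → FF}
    (h : Adm E w) (h' : Adm E' w') :
    Adm (fun p : ι × κ => E p.1 + E' p.2) (fun p => w p.1 * w' p.2) := by
  constructor
  · intro N
    refine ((h.1 N).prod (h'.1 N)).subset ?_
    rintro ⟨i, j⟩ ⟨h1, h2⟩
    have hi := left_ne_zero_of_mul h2
    have hj := right_ne_zero_of_mul h2
    have := h.2 _ hi
    have := h'.2 _ hj
    simp only at *
    exact ⟨⟨by linarith, hi⟩, ⟨by linarith, hj⟩⟩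
  · rintro ⟨i, j⟩ h2
    have := h.2 _ (left_ne_zero_of_mul h2)
    have := h'.2 _ (right_ne_zero_of_mul h2)
    simp only at *
    linarith

theorem gs_mul {ι κ : Type*} {E : ι → ℤ} {w : ι → FF} {E' : κ → ℤ} {w' : κ → FF}
    (h : Adm E w) (h' : Adm E' w') :
    gs E w * gs E' w' = gs (fun p : ι × κ => E p.1 + E' p.2) (fun p => w p.1 * w' p.2) := by
  classical
  ext N
  rw [coeff_mul, coeff_gs]
  set S := (h.1 N).toFinset with hS
  set S' := (h'.1 N).toFinset with hS'
  have e1 : ∀ a ≤ N, coeff a (gs E w) = ∑ i ∈ S, if E i = (a : ℤ) then w i else 0 := by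
    intro a ha
    rw [coeff_gs]
    refine finsum_eq_sum_of_support_subset _ ?_
    intro i hi
    simp only [Function.mem_support, ne_eq, ite_eq_right_iff, Classical.not_imp] at hi
    simp only [hS, Set.Finite.coe_toFinset, Set.mem_ofPred_eq]
    exact ⟨by rw [hi.1]; exact_mod_cast ha, hi.2⟩
  have e2 : ∀ a ≤ N, coeff a (gs E' w') = ∑ i ∈ S', if E' i = (a : ℤ) then w' i else 0 := by
    intro a ha
    rw [coeff_gs]
    refine finsum_eq_sum_of_support_subset _ ?_
    intro i hi
    simp only [Function.mem_support, ne_eq, ite_eq_right_iff, Classical.not_imp] at hi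
    simp only [hS', Set.Finite.coe_toFinset, Set.mem_ofPred_eq]
    exact ⟨by rw [hi.1]; exact_mod_cast ha, hi.2⟩
  have e3 : (∑ᶠ i : ι × κ, if E i.1 + E' i.2 = (N : ℤ) then w i.1 * w' i.2 else 0)
      = ∑ p ∈ S ×ˢ S', if E p.1 + E' p.2 = (N : ℤ) then w p.1 * w' p.2 else 0 := by
    refine finsum_eq_sum_of_support_subset _ ?_
    rintro ⟨i, j⟩ hi
    simp only [Function.mem_support, ne_eq, ite_eq_right_iff, Classical.not_imp] at hi
    have hwi := left_ne_zero_of_mul hi.2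
    have hwj := right_ne_zero_of_mul hi.2
    have := h.2 _ hwi
    have := h'.2 _ hwj
    simp only [Finset.coe_product, Set.mem_prod, hS, hS', Set.Finite.coe_toFinset,
      Set.mem_ofPred_eq]
    exact ⟨⟨by linarith, hwi⟩, ⟨by linarith, hwj⟩⟩
  rw [e3, Finset.sum_product]
  have e4 : ∀ p ∈ Finset.HasAntidiagonal.antidiagonal N, coeff p.1 (gs E w) * coeff p.2 (gs E' w')
      = ∑ i ∈ S, ∑ j ∈ S', (if E i = (p.1 : ℤ) then w i else 0) *
          (if E' j = (p.2 : ℤ) then w' j else 0) := by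
    intro p hp
    have := Finset.HasAntidiagonal.mem_antidiagonal.mp hp
    rw [e1 _ (by omega), e2 _ (by omega), Finset.sum_mul_sum]
  rw [Finset.sum_congr rfl e4, Finset.sum_comm]
  refine Finset.sum_congr rfl fun i hi => ?_
  rw [Finset.sum_comm]
  refine Finset.sum_congr rfl fun j hj => ?_
  have hi' : E i ≤ N ∧ w i ≠ 0 := by simpa [hS] using hi
  have hj' : E' j ≤ N ∧ w' j ≠ 0 := by simpa [hS'] using hj
  have p1 := h.2 _ hi'.2
  have p2 := h'.2 _ hj'.2
  obtain ⟨a, ha⟩ := Int.eq_ofNat_of_zero_le p1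
  obtain ⟨b, hb⟩ := Int.eq_ofNat_of_zero_le p2
  rw [ha, hb]
  by_cases hab : a + b = N
  · rw [if_pos (by exact_mod_cast hab), Finset.sum_eq_single (a, b)]
    · simp
    · rintro ⟨c, d⟩ _ hne
      simp only [Nat.cast_inj]
      by_cases hc : a = c
      · by_cases hd : b = d
        · subst hc hd; exact absurd rfl hne
        · simp [hd]
      · simp [hc]
    · intro hn; exact absurd (Finset.HasAntidiagonal.mem_antidiagonal.mpr hab) hn
  · rw [if_neg (by exact_mod_cast hab)]
    refine Finset.sum_eq_zero ?_
    rintro ⟨c, d⟩ hcd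
    have := Finset.HasAntidiagonal.mem_antidiagonal.mp hcd
    simp only [Nat.cast_inj]
    by_cases hc : a = c
    · have : b ≠ d := by rintro rfl; subst hc; exact hab this
      simp [this]
    · simp [hc]

theorem finite_of_bdd {ι : Type*} (k : ℕ) (f : ι → (Fin k → ℤ)) (hf : Function.Injective f)
    (S : Set ι) (M : ℤ) (h : ∀ x ∈ S, ∀ i, |f x i| ≤ M) : S.Finite := by
  have : (Set.Icc (fun _ : Fin k => -M) (fun _ => M)).Finite := Set.finite_Icc _ _
  refine (this.preimage hf.injOn).subset ?_
  intro x hx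
  exact ⟨fun i => (abs_le.mp (h x hx i)).1, fun i => (abs_le.mp (h x hx i)).2⟩

/-! part Chars -/

def f4 (z : ZMod 4) : FF := if z = 1 then 1 else if z = 3 then -1 else 0
def f3 (z : ZMod 3) : FF := if z = 1 then 1 else if z = 2 then -1 else 0
def c4 (x : ℤ) : FF := f4 (x : ZMod 4)
def c3 (x : ℤ) : FF := f3 (x : ZMod 3)
def c12 (x : ℤ) : FF := c3 x * c4 x
def sg (x : ℤ) : FF := ((Int.sign x : ℤ) : FF)

theorem c4_neg (x : ℤ) : c4 (-x) = - c4 x := by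
  have : ∀ z : ZMod 4, f4 (-z) = - f4 z := by decide
  simp [c4, this]

theorem c3_neg (x : ℤ) : c3 (-x) = - c3 x := by
  have : ∀ z : ZMod 3, f3 (-z) = - f3 z := by decide
  simp [c3, this]

theorem c12_neg (x : ℤ) : c12 (-x) = c12 x := by
  simp [c12, c3_neg, c4_neg]

theorem sg_neg (x : ℤ) : sg (-x) = - sg x := by simp [sg, Int.sign_neg]

theorem c4_same {x y : ℤ} (t : ℤ) (h : x = y + 4 * t) : c4 x = c4 y := by
  subst h
  have : (4 : ZMod 4) = 0 := rfl
  simp [c4, this]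

theorem c4_flip {x y : ℤ} (t : ℤ) (h : x = y + 2 + 4 * t) : c4 x = - c4 y := by
  subst h
  have h4 : (4 : ZMod 4) = 0 := rfl
  have : ∀ z : ZMod 4, f4 (z + 2) = - f4 z := by decide
  simp [c4, h4, this]

theorem c3_same {x y : ℤ} (t : ℤ) (h : x = y + 3 * t) : c3 x = c3 y := by
  subst h
  have : (3 : ZMod 3) = 0 := rfl
  simp [c3, this]

theorem c4_ne {x : ℤ} (h : c4 x ≠ 0) : x % 2 = 1 := by
  by_contra h'
  apply h
  obtain ⟨t, ht⟩ : ∃ t, x = 4 * t ∨ x = 4 * t + 2 := ⟨x / 4, by omega⟩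
  rcases ht with ht | ht
  · rw [c4_same (y := 0) t (by omega)]; decide
  · rw [c4_same (y := 2) t (by omega)]; decide

theorem c4_even {x : ℤ} (h : x % 2 = 0) : c4 x = 0 := by
  by_contra h'
  have := c4_ne h'
  omega

theorem c3_ne {x : ℤ} (h : c3 x ≠ 0) : x % 3 ≠ 0 := by
  intro h'
  apply h
  rw [c3_same (y := 0) (x / 3) (by omega)]; decide

theorem c12_ne {x : ℤ} (h : c12 x ≠ 0) : x % 2 = 1 ∧ x % 3 ≠ 0 :=
  ⟨c4_ne (right_ne_zero_of_mul h), c3_ne (left_ne_zero_of_mul h)⟩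

theorem sg_pos {x : ℤ} (h : 0 < x) : sg x = 1 := by simp [sg, Int.sign_eq_one_of_pos h]
theorem sg_neg' {x : ℤ} (h : x < 0) : sg x = -1 := by simp [sg, Int.sign_eq_neg_one_of_neg h]

theorem sg_add_ne {x y : ℤ} (hx : x ≠ 0) (hy : y ≠ 0) (h : sg x + sg y ≠ 0) :
    (0 < x ∧ 0 < y) ∨ (x < 0 ∧ y < 0) := by
  rcases lt_or_gt_of_ne hx with h1 | h1 <;> rcases lt_or_gt_of_ne hy with h2 | h2
  · exact Or.inr ⟨h1, h2⟩
  · exact absurd (by rw [sg_neg' h1, sg_pos h2]; decide) h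
  · exact absurd (by rw [sg_pos h1, sg_neg' h2]; decide) h
  · exact Or.inl ⟨h1, h2⟩

/-! part Lat3 -/

abbrev Z3 := ℤ × ℤ × ℤ

def Q3 (x : Z3) : ℤ := x.1 ^ 2 + 3 * x.2.1 ^ 2 - 9 * x.2.2 ^ 2
def Om3 (x : Z3) : FF := c12 x.1 * c4 x.2.1 * c4 x.2.2
def T3 (N : ℤ) (w : Z3 → FF) (x : Z3) : FF := if Q3 x = N then Om3 x * w x else 0

theorem T3_ne {N : ℤ} {w : Z3 → FF} {x : Z3} (h : T3 N w x ≠ 0) :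
    Q3 x = N ∧ x.1 % 2 = 1 ∧ x.1 % 3 ≠ 0 ∧ x.2.1 % 2 = 1 ∧ x.2.2 % 2 = 1 ∧ w x ≠ 0 := by
  unfold T3 at h
  split_ifs at h with h1
  · have a := left_ne_zero_of_mul h
    have b := right_ne_zero_of_mul h
    unfold Om3 at a
    have c := c12_ne (left_ne_zero_of_mul (left_ne_zero_of_mul a))
    exact ⟨h1, c.1, c.2, c4_ne (right_ne_zero_of_mul (left_ne_zero_of_mul a)),
      c4_ne (right_ne_zero_of_mul a), b⟩
  · exact absurd rfl h

theorem inj3 (f g h : Z3 → ℤ)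
    (H : ∀ x y, f x = f y → g x = g y → h x = h y → x = y) :
    Function.Injective (fun x => ![f x, g x, h x]) := by
  intro x y hxy
  have h0 := congrFun hxy 0
  have h1 := congrFun hxy 1
  have h2 := congrFun hxy 2
  simp at h0 h1 h2
  exact H x y h0 h1 h2

theorem fin3 (S : Set Z3) (f g h : Z3 → ℤ) (M : ℤ)
    (H : ∀ x y, f x = f y → g x = g y → h x = h y → x = y)
    (hb : ∀ x ∈ S, |f x| ≤ M ∧ |g x| ≤ M ∧ |h x| ≤ M) : S.Finite := by
  refine finite_of_bdd 3 _ (inj3 f g h H) S M ?_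
  intro x hx i
  have := hb x hx
  fin_cases i <;> simp [this]

theorem abs_le_of_sq {x M : ℤ} (h : x ^ 2 ≤ M) : |x| ≤ M := by
  have h1 : |x| ^ 2 ≤ M := by rwa [sq_abs]
  nlinarith [abs_nonneg x]

theorem T3_fin1 (N : ℤ) (φ : Z3 → FF) :
    (Function.support (T3 N fun x => φ x * (sg x.2.2 + sg (x.2.1 - 2 * x.2.2)))).Finite := by
  refine fin3 _ (fun x => x.1) (fun x => x.2.1 - 2 * x.2.2) (fun x => x.2.2) N ?_ ?_
  · rintro ⟨u, b, d⟩ ⟨u', b', d'⟩ h1 h2 h3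
    simp only at h1 h2 h3
    subst h1 h3
    simp only [Prod.mk.injEq, true_and, and_true]; omega
  · rintro ⟨u, b, d⟩ hx
    obtain ⟨h1, h2, h3, h4, h5, h6⟩ := T3_ne hx
    simp only [Q3] at *
    have := sg_add_ne (by omega) (by omega) (right_ne_zero_of_mul h6)
    have hp : 0 < d * (b - 2 * d) := by
      rcases this with ⟨a, b⟩ | ⟨a, b⟩
      · exact mul_pos a b
      · exact mul_pos_of_neg_of_neg a b
    have e : u ^ 2 + 3 * (b - 2 * d) ^ 2 + 3 * d ^ 2 + 12 * (d * (b - 2 * d)) = N := by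
      rw [← h1]; ring
    refine ⟨abs_le_of_sq ?_, abs_le_of_sq ?_, abs_le_of_sq ?_⟩ <;>
      nlinarith [sq_nonneg u, sq_nonneg (b - 2 * d), sq_nonneg d]

theorem T3_fin2 (N : ℤ) (φ : Z3 → FF) :
    (Function.support (T3 N fun x => φ x * (sg x.2.2 + sg (x.1 - 3 * x.2.2)))).Finite := by
  refine fin3 _ (fun x => x.1 - 3 * x.2.2) (fun x => x.2.1) (fun x => x.2.2) N ?_ ?_
  · rintro ⟨u, b, d⟩ ⟨u', b', d'⟩ h1 h2 h3
    simp only at h1 h2 h3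
    subst h2 h3
    simp only [Prod.mk.injEq, and_true]; omega
  · rintro ⟨u, b, d⟩ hx
    obtain ⟨h1, h2, h3, h4, h5, h6⟩ := T3_ne hx
    simp only [Q3] at *
    have := sg_add_ne (by omega) (by omega) (right_ne_zero_of_mul h6)
    have hp : 0 < d * (u - 3 * d) ∧ |d| ≤ d * (u - 3 * d) := by
      rcases this with ⟨a, b⟩ | ⟨a, b⟩
      · refine ⟨mul_pos a b, ?_⟩
        rw [abs_of_pos a]; nlinarith
      · refine ⟨mul_pos_of_neg_of_neg a b, ?_⟩
        rw [abs_of_neg a]; nlinarith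
    have e : 3 * b ^ 2 + (u - 3 * d) ^ 2 + 6 * (d * (u - 3 * d)) = N := by
      rw [← h1]; ring
    refine ⟨abs_le_of_sq ?_, abs_le_of_sq ?_, ?_⟩ <;>
      nlinarith [sq_nonneg b, sq_nonneg (u - 3 * d)]

def rho (x : Z3) : Z3 := (x.1, 3 * x.2.2 - 2 * x.2.1, 2 * x.2.2 - x.2.1)
def kk (x : Z3) : ℤ := x.1 + x.2.1 - 3 * x.2.2
def sig (x : Z3) : Z3 := (x.1 - 6 * kk x, x.2.1 - 2 * kk x, x.2.2 - 2 * kk x)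

def P3 (x : Z3) : Prop := x.1 % 2 = 1 ∧ x.2.1 % 2 = 1 ∧ x.2.2 % 2 = 1

theorem P3_of {N : ℤ} {w : Z3 → FF} (x : Z3) (h : T3 N w x ≠ 0) : P3 x := by
  have := T3_ne h
  exact ⟨this.2.1, this.2.2.2.1, this.2.2.2.2.1⟩

theorem P3_rho (x : Z3) (h : P3 x) : P3 (rho x) := by
  obtain ⟨u, b, d⟩ := x
  obtain ⟨h1, h2, h3⟩ := h
  simp only [P3, rho] at *
  omega

theorem P3_sig (x : Z3) (h : P3 x) : P3 (sig x) := by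
  obtain ⟨u, b, d⟩ := x
  obtain ⟨h1, h2, h3⟩ := h
  simp only [P3, sig, kk] at *
  omega

theorem rho_rho (x : Z3) : rho (rho x) = x := by
  obtain ⟨u, b, d⟩ := x
  simp only [rho, Prod.mk.injEq]
  refine ⟨trivial, ?_, ?_⟩ <;> ring

theorem sig_sig (x : Z3) : sig (sig x) = x := by
  obtain ⟨u, b, d⟩ := x
  simp only [sig, kk, Prod.mk.injEq]
  refine ⟨?_, ?_, ?_⟩ <;> ring

theorem T3_rho (N : ℤ) (w : Z3 → FF) (x : Z3) (h : P3 x) :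
    T3 N w (rho x) = T3 N (fun y => w (rho y)) x := by
  have hQ : Q3 (rho x) = Q3 x := by
    obtain ⟨u, b, d⟩ := x
    simp only [Q3, rho]; ring
  have hO : Om3 (rho x) = Om3 x := by
    obtain ⟨u, b, d⟩ := x
    obtain ⟨h1, h2, h3⟩ := h
    simp only [Om3, rho] at *
    have e : ∀ z y : ZMod 4, (z = 1 ∨ z = 3) → (y = 1 ∨ y = 3) →
      f4 (3 * y - 2 * z) * f4 (2 * y - z) = f4 z * f4 y := by decide
    have e1 : ∀ z : ℤ, z % 2 = 1 → ((z : ZMod 4) = 1 ∨ (z : ZMod 4) = 3) := by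
      intro z hz
      obtain ⟨t, ht⟩ : ∃ t, z = 1 + 4 * t ∨ z = 3 + 4 * t := ⟨z / 4, by omega⟩
      have h4 : (4 : ZMod 4) = 0 := rfl
      rcases ht with rfl | rfl
      · left; simp [h4]
      · right; simp [h4]
    have := e b d (e1 _ h2) (e1 _ h3)
    rw [mul_assoc, mul_assoc]
    congr 1
    simpa [c4] using this
  simp only [T3, hQ, hO]

theorem T3_sig (N : ℤ) (w : Z3 → FF) (x : Z3) (h : P3 x) :
    T3 N w (sig x) = T3 N (fun y => - w (sig y)) x := by
  have hQ : Q3 (sig x) = Q3 x := by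
    obtain ⟨u, b, d⟩ := x
    simp only [Q3, sig, kk]; ring
  have hO : Om3 (sig x) = - Om3 x := by
    obtain ⟨u, b, d⟩ := x
    obtain ⟨h1, h2, h3⟩ := h
    simp only [Om3, sig, c12] at *
    have hk : kk (u, b, d) % 2 = 1 := by simp only [kk]; omega
    obtain ⟨t, ht⟩ : ∃ t, kk (u, b, d) = 2 * t + 1 := ⟨kk (u, b, d) / 2, by omega⟩
    rw [ht]
    have e0 : c3 (u - 6 * (2 * t + 1)) = c3 u := c3_same (-(2 * (2 * t + 1))) (by ring)
    have e1 : c4 (u - 6 * (2 * t + 1)) = - c4 u := c4_flip (-3 * t - 2) (by ring)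
    have e2 : c4 (b - 2 * (2 * t + 1)) = - c4 b := c4_flip (- t - 1) (by ring)
    have e3 : c4 (d - 2 * (2 * t + 1)) = - c4 d := c4_flip (- t - 1) (by ring)
    rw [e0, e1, e2, e3]
    ring
  simp only [T3, hQ, hO]
  split_ifs <;> ring

theorem S3_rho (N : ℤ) (w : Z3 → FF) :
    ∑ᶠ x, T3 N w x = ∑ᶠ x, T3 N (fun y => w (rho y)) x :=
  finsum_invol rho P3 _ _ P3_rho (fun x _ => rho_rho x) (fun x h => T3_rho N w x h)
    (fun x h => P3_of x h) (fun x h => P3_of x h)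

theorem F3_rho {N : ℤ} {w : Z3 → FF} (hf : (Function.support (T3 N w)).Finite) :
    (Function.support (T3 N (fun y => w (rho y)))).Finite :=
  finite_invol rho P3 _ _ (fun x _ => rho_rho x) (fun x h => T3_rho N w x h)
    (fun x h => P3_of x h) hf

theorem S3_sig (N : ℤ) (w : Z3 → FF) :
    ∑ᶠ x, T3 N w x = ∑ᶠ x, T3 N (fun y => - w (sig y)) x :=
  finsum_invol sig P3 _ _ P3_sig (fun x _ => sig_sig x) (fun x h => T3_sig N w x h)
    (fun x h => P3_of x h) (fun x h => P3_of x h)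

theorem T3_add (N : ℤ) (v w : Z3 → FF) (x : Z3) :
    T3 N (fun y => v y + w y) x = T3 N v x + T3 N w x := by
  simp only [T3]; split_ifs <;> ring

theorem S3_add {N : ℤ} {v w : Z3 → FF} (hv : (Function.support (T3 N v)).Finite)
    (hw : (Function.support (T3 N w)).Finite) :
    ∑ᶠ x, T3 N (fun y => v y + w y) x = ∑ᶠ x, T3 N v x + ∑ᶠ x, T3 N w x := by
  rw [← finsum_add_distrib hv hw]
  exact finsum_congr (T3_add N v w)

theorem F3_add {N : ℤ} {v w : Z3 → FF} (hv : (Function.support (T3 N v)).Finite)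
    (hw : (Function.support (T3 N w)).Finite) :
    (Function.support (T3 N (fun y => v y + w y))).Finite := by
  refine (hv.union hw).subset ?_
  intro x hx
  rw [Function.mem_support, T3_add] at hx
  by_contra h
  simp only [Set.mem_union, Function.mem_support, not_or, not_not] at h
  rw [h.1, h.2] at hx
  simp at hx

theorem S3_smul (N : ℤ) (w : Z3 → FF) (a : FF) :
    ∑ᶠ x, T3 N (fun y => a * w y) x = a * ∑ᶠ x, T3 N w x := by
  rw [mul_finsum]
  refine finsum_congr fun x => ?_
  simp only [T3]; split_ifs <;> ring

theorem F3_mul {N : ℤ} {w : Z3 → FF} (φ : Z3 → FF) (hv : (Function.support (T3 N w)).Finite) :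
    (Function.support (T3 N (fun y => φ y * w y))).Finite := by
  refine hv.subset ?_
  intro x hx h0
  apply hx
  have : T3 N (fun y => φ y * w y) x = φ x * T3 N w x := by
    simp only [T3]; split_ifs <;> ring
  rw [this, h0, mul_zero]

def k1 (x : Z3) : FF := sg x.2.2 + sg (x.1 - 3 * x.2.2)
def k2 (x : Z3) : FF := - sg (x.2.1 - 2 * x.2.2) + sg (x.1 + 3 * x.2.1 - 6 * x.2.2)
def k3 (x : Z3) : FF := sg (x.1 + 3 * x.2.1 - 6 * x.2.2) - sg (x.1 - 3 * x.2.2)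

theorem k1_rho (x : Z3) : k1 (rho x) = k2 x := by
  obtain ⟨u, b, d⟩ := x
  simp only [k1, k2, rho]
  rw [← sg_neg]
  congr 2 <;> ring

theorem k2_rho (x : Z3) : k2 (rho x) = k1 x := by
  rw [← k1_rho, rho_rho]

theorem k3_rho (x : Z3) : k3 (rho x) = - k3 x := by
  obtain ⟨u, b, d⟩ := x
  simp only [k3, rho]
  rw [neg_sub]
  congr 2 <;> ring

theorem k3_sig (x : Z3) : k3 (sig x) = k3 x := by
  obtain ⟨u, b, d⟩ := x
  simp only [k3, sig, kk]
  congr 2 <;> ring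

theorem S3_k1_odd (N : ℤ) (w : Z3 → FF) (hw : ∀ u b d, w (u, -b, d) = w (u, b, d)) :
    ∑ᶠ x, T3 N (fun y => w y * k1 y) x = 0 := by
  refine finsum_invol_neg (fun x => (x.1, - x.2.1, x.2.2)) (fun _ => True) _ (fun _ _ => trivial)
    (fun x _ => by simp) ?_ (fun _ _ => trivial)
  rintro ⟨u, b, d⟩ _
  have hQ : Q3 (u, -b, d) = Q3 (u, b, d) := by simp [Q3]
  have hO : Om3 (u, -b, d) = - Om3 (u, b, d) := by simp [Om3, c4_neg]
  simp only [T3, hQ, hO, k1, hw]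
  split_ifs <;> ring

theorem F3_k1 (N : ℤ) (φ : Z3 → FF) : (Function.support (T3 N fun x => φ x * k1 x)).Finite :=
  T3_fin2 N φ

theorem F3_k2 (N : ℤ) (φ : Z3 → FF) : (Function.support (T3 N fun x => φ x * k2 x)).Finite := by
  have := F3_rho (F3_k1 N (fun x => φ (rho x)))
  simpa only [rho_rho, k1_rho] using this

theorem F3_k3 (N : ℤ) (φ : Z3 → FF) : (Function.support (T3 N fun x => φ x * k3 x)).Finite := by
  have h1 := T3_fin1 N φ
  have h2 := F3_k1 N (fun x => - φ x)
  have h3 := F3_k2 N φ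
  have := F3_add (F3_add h1 h2) h3
  convert this using 5
  simp only [k1, k2, k3]; ring

/-- the key three-variable lattice identity -/
theorem lattice3 (N : ℤ) :
    ∑ᶠ x, T3 N (fun x => ((x.2.1 - 2 * x.2.2 : ℤ) : FF) *
      (sg x.2.2 + sg (x.2.1 - 2 * x.2.2))) x
    = ∑ᶠ x, T3 N (fun x => (x.2.1 : FF) * k1 x) x := by
  have hAd : ∑ᶠ x, T3 N (fun x => (x.2.2 : FF) * k1 x) x = 0 :=
    S3_k1_odd N (fun x => (x.2.2 : FF)) (fun _ _ _ => rfl)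
  set C : (Z3 → FF) → FF := fun w => ∑ᶠ x, T3 N (fun x => w x * k3 x) x with hC
  have Cadd : ∀ v w, C (fun x => v x + w x) = C v + C w := by
    intro v w
    simp only [hC]
    rw [← S3_add (F3_k3 N v) (F3_k3 N w)]
    simp only [add_mul]
  have Csmul : ∀ (a : FF) w, C (fun x => a * w x) = a * C w := by
    intro a w
    simp only [hC]
    rw [← S3_smul]
    simp only [mul_assoc]
  have Crho : ∀ w, C w = - C (fun x => w (rho x)) := by
    intro w
    have := S3_rho N (fun x => w x * k3 x)
    simp only [k3_rho] at this
    simp only [hC]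
    rw [this, ← neg_one_mul, ← S3_smul]
    congr! 3
    ext; ring
  have Csig : ∀ w, C w = - C (fun x => w (sig x)) := by
    intro w
    have := S3_sig N (fun x => w x * k3 x)
    simp only [k3_sig] at this
    simp only [hC]
    rw [this, ← neg_one_mul, ← S3_smul]
    congr! 3
    ext; ring
  set wX : Z3 → FF := fun x => ((x.2.1 - 2 * x.2.2 : ℤ) : FF) with hwX
  set wd : Z3 → FF := fun x => (x.2.2 : FF) with hwd
  set wk : Z3 → FF := fun x => (kk x : FF) with hwk
  have c1 : C wX = C wd := by
    rw [Crho wX]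
    have : (fun x => wX (rho x)) = fun x => (-1) * wd x := by
      ext x; simp only [hwX, hwd, rho]; push_cast; ring
    rw [this, Csmul]; ring
  have c2 : C wX = - (C wX + 2 * C wk) := by
    conv_lhs => rw [Csig wX]
    have : (fun x => wX (sig x)) = fun x => wX x + 2 * wk x := by
      ext x; simp only [hwX, hwk, sig]; push_cast; ring
    rw [this, Cadd, Csmul]
  have c3 : C wd = - (C wd + (-2) * C wk) := by
    conv_lhs => rw [Csig wd]
    have : (fun x => wd (sig x)) = fun x => wd x + (-2) * wk x := by
      ext x; simp only [hwd, hwk, sig]; push_cast; ring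
    rw [this, Cadd, Csmul]
  have cX : C wX = 0 := by
    rw [← c1] at c3
    have : (2 : FF) * (2 * C wX) = 0 := by linear_combination c2 + c3
    exact FF_two_mul (FF_two_mul this)
  have hB : ∑ᶠ x, T3 N (fun x => wX x * k2 x) x = 0 := by
    rw [S3_rho]
    simp only [k2_rho]
    have : (fun x => wX (rho x) * k1 x) = fun x => (-1) * (wd x * k1 x) := by
      ext x; simp only [hwX, hwd, rho]; push_cast; ring
    rw [this, S3_smul, hAd, mul_zero]
  have split : (fun x : Z3 => wX x * (sg x.2.2 + sg (x.2.1 - 2 * x.2.2)))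
      = fun x => (((x.2.1 : FF) * k1 x + (-2) * (wd x * k1 x)) + (-1) * (wX x * k2 x))
        + wX x * k3 x := by
    ext x; simp only [hwX, hwd, k1, k2, k3]; push_cast; ring
  have f1 := F3_k1 N (fun x => (x.2.1 : FF))
  have f2 := F3_mul (fun _ => -2) (F3_k1 N wd)
  have f3 := F3_mul (fun _ => -1) (F3_k2 N wX)
  rw [split, S3_add (F3_add (F3_add f1 f2) f3) (F3_k3 N wX), S3_add (F3_add f1 f2) f3,
    S3_add f1 f2, S3_smul, S3_smul, hB, hAd]
  have : ∑ᶠ x, T3 N (fun x => wX x * k3 x) x = 0 := cX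
  rw [this]; ring

/-! part Lat4 -/

abbrev Z4 := ℤ × ℤ × ℤ × ℤ

def z3 (x : ℤ) : FF := if (x : ZMod 3) = 0 then 1 else 0

theorem z3_same {x y : ℤ} (t : ℤ) (h : x = y + 3 * t) : z3 x = z3 y := by
  subst h
  have : (3 : ZMod 3) = 0 := rfl
  simp [z3, this]

theorem z3_ne {x : ℤ} (h : z3 x ≠ 0) : x % 3 = 0 := by
  unfold z3 at h
  split_ifs at h with h1
  · have := (ZMod.intCast_zmod_eq_zero_iff_dvd x 3).mp h1
    omega
  · exact absurd rfl h

theorem z3_neg (x : ℤ) : z3 (-x) = z3 x := by simp [z3]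

def Q4 (x : Z4) : ℤ := x.1 ^ 2 + (x.2.1 ^ 2 + (x.2.2.1 ^ 2 - x.2.2.2 ^ 2))
def Om4 (x : Z4) : FF :=
  c12 x.1 * (c12 x.2.1 * (c12 x.2.2.1 * (c4 x.2.2.2 * z3 x.2.2.2)))
def T4 (N : ℤ) (w : Z4 → FF) (x : Z4) : FF := if Q4 x = N then Om4 x * w x else 0
def S4 (N : ℤ) (w : Z4 → FF) : FF := ∑ᶠ x, T4 N w x
def Fs (N : ℤ) (w : Z4 → FF) : Prop := (Function.support (T4 N w)).Finite

def P4 (x : Z4) : Prop :=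
  (x.1 % 2 = 1 ∧ x.2.1 % 2 = 1 ∧ x.2.2.1 % 2 = 1 ∧ x.2.2.2 % 2 = 1) ∧
  (x.1 % 3 ≠ 0 ∧ x.2.1 % 3 ≠ 0 ∧ x.2.2.1 % 3 ≠ 0 ∧ x.2.2.2 % 3 = 0)

theorem P4_of {x : Z4} (h : Om4 x ≠ 0) : P4 x := by
  unfold Om4 at h
  have a1 := c12_ne (left_ne_zero_of_mul h)
  have h := right_ne_zero_of_mul h
  have a2 := c12_ne (left_ne_zero_of_mul h)
  have h := right_ne_zero_of_mul h
  have a3 := c12_ne (left_ne_zero_of_mul h)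
  have h := right_ne_zero_of_mul h
  exact ⟨⟨a1.1, a2.1, a3.1, c4_ne (left_ne_zero_of_mul h)⟩,
    ⟨a1.2, a2.2, a3.2, z3_ne (right_ne_zero_of_mul h)⟩⟩

theorem T4_ne {N : ℤ} {w : Z4 → FF} {x : Z4} (h : T4 N w x ≠ 0) :
    Q4 x = N ∧ Om4 x ≠ 0 ∧ w x ≠ 0 := by
  unfold T4 at h
  split_ifs at h with h1
  · exact ⟨h1, left_ne_zero_of_mul h, right_ne_zero_of_mul h⟩
  · exact absurd rfl h

theorem T4_map {N : ℤ} {w w' : Z4 → FF} {x y : Z4} (hQ : Q4 y = Q4 x)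
    (hW : Q4 x = N → Om4 y * w y = Om4 x * w' x) : T4 N w y = T4 N w' x := by
  simp only [T4, hQ]
  split_ifs with h
  · exact hW h
  · rfl

theorem S4_map {N : ℤ} (s : Z4 → Z4) (P : Z4 → Prop) (w w' : Z4 → FF)
    (h1 : ∀ x, P x → P (s x)) (h2 : ∀ x, P x → s (s x) = x)
    (hQ : ∀ x, P x → Q4 (s x) = Q4 x)
    (hW : ∀ x, P x → Q4 x = N → Om4 (s x) * w (s x) = Om4 x * w' x)
    (hw : ∀ x, Om4 x ≠ 0 → w x ≠ 0 → P x) (hw' : ∀ x, Om4 x ≠ 0 → w' x ≠ 0 → P x) :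
    S4 N w = S4 N w' :=
  finsum_invol s P _ _ h1 h2 (fun x h => T4_map (hQ x h) (hW x h))
    (fun x h => hw x (T4_ne h).2.1 (T4_ne h).2.2) (fun x h => hw' x (T4_ne h).2.1 (T4_ne h).2.2)

theorem Fs_map {N : ℤ} (s : Z4 → Z4) (P : Z4 → Prop) (w w' : Z4 → FF)
    (h2 : ∀ x, P x → s (s x) = x)
    (hQ : ∀ x, P x → Q4 (s x) = Q4 x)
    (hW : ∀ x, P x → Q4 x = N → Om4 (s x) * w (s x) = Om4 x * w' x)
    (hw' : ∀ x, Om4 x ≠ 0 → w' x ≠ 0 → P x) (hf : Fs N w) :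
    Fs N w' :=
  finite_invol s P _ _ h2 (fun x h => T4_map (hQ x h) (hW x h))
    (fun x h => hw' x (T4_ne h).2.1 (T4_ne h).2.2) hf

theorem S4_zero {N : ℤ} (s : Z4 → Z4) (P : Z4 → Prop) (w : Z4 → FF)
    (h1 : ∀ x, P x → P (s x)) (h2 : ∀ x, P x → s (s x) = x)
    (hQ : ∀ x, P x → Q4 (s x) = Q4 x)
    (hW : ∀ x, P x → Q4 x = N → Om4 (s x) * w (s x) = - (Om4 x * w x))
    (hw : ∀ x, Om4 x ≠ 0 → w x ≠ 0 → P x) : S4 N w = 0 := by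
  refine finsum_invol_neg s P _ h1 h2 (fun x h => ?_)
    (fun x h => hw x (T4_ne h).2.1 (T4_ne h).2.2)
  have := T4_map (N := N) (w := w) (w' := fun x => - w x) (hQ x h)
    (fun hN => by rw [hW x h hN]; ring)
  rw [this]
  simp only [T4]; split_ifs <;> ring

theorem T4_add (N : ℤ) (v w : Z4 → FF) (x : Z4) :
    T4 N (fun y => v y + w y) x = T4 N v x + T4 N w x := by
  simp only [T4]; split_ifs <;> ring

theorem S4_add {N : ℤ} {v w : Z4 → FF} (hv : Fs N v) (hw : Fs N w) :
    S4 N (fun y => v y + w y) = S4 N v + S4 N w := by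
  unfold S4
  rw [← finsum_add_distrib hv hw]
  exact finsum_congr (T4_add N v w)

theorem Fs_add {N : ℤ} {v w : Z4 → FF} (hv : Fs N v) (hw : Fs N w) :
    Fs N (fun y => v y + w y) := by
  refine (hv.union hw).subset ?_
  intro x hx
  rw [Function.mem_support, T4_add] at hx
  by_contra h
  simp only [Set.mem_union, Function.mem_support, not_or, not_not] at h
  rw [h.1, h.2] at hx
  simp at hx

theorem S4_smul (N : ℤ) (a : FF) (w : Z4 → FF) :
    S4 N (fun y => a * w y) = a * S4 N w := by
  unfold S4
  rw [mul_finsum]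
  refine finsum_congr fun x => ?_
  simp only [T4]; split_ifs <;> ring

theorem Fs_mul {N : ℤ} {w : Z4 → FF} (φ : Z4 → FF) (hv : Fs N w) :
    Fs N (fun y => φ y * w y) := by
  refine Set.Finite.subset hv ?_
  intro x hx h0
  apply hx
  have : T4 N (fun y => φ y * w y) x = φ x * T4 N w x := by
    simp only [T4]; split_ifs <;> ring
  rw [this, h0, mul_zero]

theorem S4_congr {N : ℤ} {v w : Z4 → FF} (h : ∀ x, Q4 x = N → Om4 x ≠ 0 → v x = w x) :
    S4 N v = S4 N w := by
  refine finsum_congr fun x => ?_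
  simp only [T4]
  split_ifs with hx
  · by_cases h0 : Om4 x = 0
    · simp [h0]
    · rw [h x hx h0]
  · rfl

/-- kernels -/
def ku (x : Z4) : FF := sg x.2.2.2 - sg (x.2.2.2 - x.2.2.1)
def kw (x : Z4) : FF := sg x.2.2.2 - sg (x.2.2.2 - x.2.1)
def kv (x : Z4) : FF := sg x.2.2.2 - sg (x.2.2.2 - x.1)
def kl (x : Z4) : FF := sg x.2.2.2 - sg (5 * x.2.2.2 - 4 * x.2.1 - 3 * x.2.2.1)

theorem inj4 (f g h k : Z4 → ℤ)
    (H : ∀ x y, f x = f y → g x = g y → h x = h y → k x = k y → x = y) :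
    Function.Injective (fun x => ![f x, g x, h x, k x]) := by
  intro x y hxy
  have h0 := congrFun hxy 0
  have h1 := congrFun hxy 1
  have h2 := congrFun hxy 2
  have h3 := congrFun hxy 3
  simp at h0 h1 h2 h3
  exact H x y h0 h1 h2 h3

theorem sg_sub_ne {x y : ℤ} (hx : x ≠ 0) (hy : y ≠ 0) (h : sg x - sg y ≠ 0) :
    (0 < x ∧ y < 0) ∨ (x < 0 ∧ 0 < y) := by
  have := sg_add_ne hx (neg_ne_zero.mpr hy) (by rw [sg_neg, ← sub_eq_add_neg]; exact h)
  omega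

theorem Fs_ku (N : ℤ) (φ : Z4 → FF) : Fs N (fun x => φ x * ku x) := by
  refine finite_of_bdd 4 _ (inj4 (fun x => x.1) (fun x => x.2.1) (fun x => x.2.2.1 - x.2.2.2)
    (fun x => x.2.2.2) ?_) _ N ?_
  · rintro ⟨v, w, u, c⟩ ⟨v', w', u', c'⟩ h1 h2 h3 h4
    simp only at h1 h2 h3 h4
    subst h1 h2 h4
    simp only [Prod.mk.injEq, true_and, and_true]; omega
  · rintro ⟨v, w, u, c⟩ hx
    obtain ⟨h1, h2, h3⟩ := T4_ne hx
    obtain ⟨⟨a1, a2, a3, a4⟩, ⟨b1, b2, b3, b4⟩⟩ := P4_of h2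
    simp only [Q4] at *
    have hk := right_ne_zero_of_mul h3
    simp only [ku] at hk
    have := sg_sub_ne (by omega) (by omega) hk
    have hp : |c| ≤ c * (u - c) ∧ 0 < c * (u - c) := by
      rcases this with ⟨a, b⟩ | ⟨a, b⟩
      · rw [abs_of_pos a]; constructor <;> nlinarith
      · rw [abs_of_neg a]; constructor <;> nlinarith
    have e : v ^ 2 + w ^ 2 + (u - c) ^ 2 + 2 * (c * (u - c)) = N := by rw [← h1]; ring
    have i1 : |v| ≤ N := abs_le_of_sq (by nlinarith [sq_nonneg w, sq_nonneg (u - c)])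
    have i2 : |w| ≤ N := abs_le_of_sq (by nlinarith [sq_nonneg v, sq_nonneg (u - c)])
    have i3 : |u - c| ≤ N := abs_le_of_sq (by nlinarith [sq_nonneg v, sq_nonneg w])
    have i4 : |c| ≤ N := by nlinarith [sq_nonneg v, sq_nonneg w, sq_nonneg (u - c)]
    intro i
    fin_cases i
    · simpa using i1
    · simpa using i2
    · simpa using i3
    · simpa using i4

/-- global symmetries preserving everything -/
def swu (x : Z4) : Z4 := (x.1, x.2.2.1, x.2.1, x.2.2.2)
def svw (x : Z4) : Z4 := (x.2.1, x.1, x.2.2.1, x.2.2.2)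
def svu (x : Z4) : Z4 := (x.2.2.1, x.2.1, x.1, x.2.2.2)
def flw (x : Z4) : Z4 := (x.1, - x.2.1, x.2.2.1, x.2.2.2)
def flv (x : Z4) : Z4 := (- x.1, x.2.1, x.2.2.1, x.2.2.2)

theorem S4_sym {N : ℤ} (s : Z4 → Z4) (h2 : ∀ x, s (s x) = x)
    (hQ : ∀ x, Q4 (s x) = Q4 x) (hO : ∀ x, Om4 (s x) = Om4 x) (w : Z4 → FF) :
    S4 N w = S4 N (fun x => w (s x)) :=
  S4_map s (fun _ => True) _ _ (fun _ _ => trivial) (fun x _ => h2 x) (fun x _ => hQ x)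
    (fun x _ _ => by rw [hO]) (fun _ _ _ => trivial) (fun _ _ _ => trivial)

theorem Fs_sym {N : ℤ} (s : Z4 → Z4) (h2 : ∀ x, s (s x) = x)
    (hQ : ∀ x, Q4 (s x) = Q4 x) (hO : ∀ x, Om4 (s x) = Om4 x) {w : Z4 → FF} (hf : Fs N w) :
    Fs N (fun x => w (s x)) :=
  Fs_map s (fun _ => True) _ _ (fun x _ => h2 x) (fun x _ => hQ x)
    (fun x _ _ => by rw [hO]) (fun _ _ _ => trivial) hf

theorem S4_swu (N : ℤ) (w : Z4 → FF) : S4 N w = S4 N (fun x => w (swu x)) :=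
  S4_sym swu (fun _ => rfl) (fun x => by simp only [Q4, swu]; ring)
    (fun x => by simp only [Om4, swu]; ring) w
theorem S4_svw (N : ℤ) (w : Z4 → FF) : S4 N w = S4 N (fun x => w (svw x)) :=
  S4_sym svw (fun _ => rfl) (fun x => by simp only [Q4, svw]; ring)
    (fun x => by simp only [Om4, svw]; ring) w
theorem S4_svu (N : ℤ) (w : Z4 → FF) : S4 N w = S4 N (fun x => w (svu x)) :=
  S4_sym svu (fun _ => rfl) (fun x => by simp only [Q4, svu]; ring)
    (fun x => by simp only [Om4, svu]; ring) w
theorem S4_flw (N : ℤ) (w : Z4 → FF) : S4 N w = S4 N (fun x => w (flw x)) :=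
  S4_sym flw (fun x => by simp [flw]) (fun x => by simp only [Q4, flw]; ring)
    (fun x => by simp only [Om4, flw, c12_neg]) w
theorem S4_flv (N : ℤ) (w : Z4 → FF) : S4 N w = S4 N (fun x => w (flv x)) :=
  S4_sym flv (fun x => by simp [flv]) (fun x => by simp only [Q4, flv]; ring)
    (fun x => by simp only [Om4, flv, c12_neg]) w

theorem Fs_kw (N : ℤ) (φ : Z4 → FF) : Fs N (fun x => φ x * kw x) :=
  Fs_sym swu (fun _ => rfl) (fun x => by simp only [Q4, swu]; ring)
    (fun x => by simp only [Om4, swu]; ring) (Fs_ku N (fun x => φ (swu x)))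
theorem Fs_kv (N : ℤ) (φ : Z4 → FF) : Fs N (fun x => φ x * kv x) :=
  Fs_sym svu (fun _ => rfl) (fun x => by simp only [Q4, svu]; ring)
    (fun x => by simp only [Om4, svu]; ring) (Fs_ku N (fun x => φ (svu x)))

/-- residue functions modulo 5 -/
def ev (p : FF → FF → FF → FF → FF) (x : Z4) : FF :=
  p (x.1 : FF) (x.2.1 : FF) (x.2.2.1 : FF) (x.2.2.2 : FF)

def pt (i j k l : FF) (v w u c : FF) : FF :=
  if v ^ 2 = i ∧ w ^ 2 = j ∧ u ^ 2 = k ∧ c ^ 2 = l then 1 else 0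

def p1 (v w u c : FF) : FF := pt 1 1 4 1 v w u c - pt 4 4 1 4 v w u c
def p2 (v w u c : FF) : FF := pt 1 0 0 1 v w u c - pt 4 0 0 4 v w u c
def p3 (v w u c : FF) : FF := pt 0 1 4 0 v w u c
def dD (v w u c : FF) : FF :=
  (if v ^ 2 = 1 ∧ c ^ 2 = 1 ∧ u = 2 * w then 1 else 0) -
  (if v ^ 2 = 4 ∧ c ^ 2 = 4 ∧ u = 2 * w then 1 else 0)

set_option maxRecDepth 100000 in
theorem dD_flip : ∀ v w u c : FF,
    dD v w u c + dD v (-w) u c = 2 * p2 v w u c + p1 v w u c + p1 v u w c := by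
  decide +kernel

/-! part Lat4b -/

/-- reflection R -/
def sR (x : Z4) : Z4 :=
  (x.1, x.2.1 + 4 * ((x.2.2.1 - 2 * x.2.1) / 5), x.2.2.1 - 2 * ((x.2.2.1 - 2 * x.2.1) / 5), x.2.2.2)
def PR (x : Z4) : Prop := ∃ t : ℤ, x.2.2.1 = 2 * x.2.1 + 5 * t

theorem sR_eq (v w t c : ℤ) :
    sR (v, w, 2 * w + 5 * t, c) = (v, w + 4 * t, 2 * w + 3 * t, c) := by
  simp only [sR]
  have : (2 * w + 5 * t - 2 * w) / 5 = t := by omega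
  rw [this]
  simp only [Prod.mk.injEq, true_and, and_true]
  ring

theorem sR_eq' (v w t c : ℤ) :
    sR (v, w + 4 * t, 2 * w + 3 * t, c) = (v, w, 2 * w + 5 * t, c) := by
  have := sR_eq v (w + 4 * t) (-t) c
  have e : 2 * (w + 4 * t) + 5 * (-t) = 2 * w + 3 * t := by ring
  rw [e] at this
  rw [this]
  simp only [Prod.mk.injEq, true_and, and_true]
  constructor <;> ring

theorem dD_ne : ∀ v w u c : FF, dD v w u c ≠ 0 → u = 2 * w := by
  intro v w u c h
  by_contra h'
  apply h
  simp [dD, h']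

theorem PR_of {x : Z4} (h : ev dD x ≠ 0) : PR x := by
  obtain ⟨v, w, u, c⟩ := x
  have h1 := dD_ne _ _ _ _ h
  simp only at h1
  have h2 : ((u - 2 * w : ℤ) : FF) = 0 := by push_cast; rw [h1]; ring
  obtain ⟨t, ht⟩ := (ZMod.intCast_zmod_eq_zero_iff_dvd _ 5).mp h2
  exact ⟨t, by simp only; push_cast at ht; linarith⟩

theorem Om_R (v w t c : ℤ) :
    Om4 (v, w + 4 * t, 2 * w + 3 * t, c) = - Om4 (v, w, 2 * w + 5 * t, c) := by
  have e3 : ∀ w t : ZMod 3, f3 (w + 4 * t) * f3 (2 * w + 3 * t) = f3 w * f3 (2 * w + 5 * t) := by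
    decide
  have e4 : ∀ w t : ZMod 4, f4 (w + 4 * t) * f4 (2 * w + 3 * t) = - (f4 w * f4 (2 * w + 5 * t)) := by
    decide
  have e3' : c3 (w + 4 * t) * c3 (2 * w + 3 * t) = c3 w * c3 (2 * w + 5 * t) := by
    simpa [c3] using e3 w t
  have e4' : c4 (w + 4 * t) * c4 (2 * w + 3 * t) = - (c4 w * c4 (2 * w + 5 * t)) := by
    simpa [c4] using e4 w t
  simp only [Om4, c12]
  linear_combination (c3 v * c4 v * c4 c * z3 c) * (c4 (w + 4 * t) * c4 (2 * w + 3 * t)) * e3'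
    + (c3 v * c4 v * c4 c * z3 c) * (c3 w * c3 (2 * w + 5 * t)) * e4'

theorem sg_five (x : ℤ) : sg (5 * x) = sg x := by
  have : Int.sign 5 = 1 := rfl
  simp [sg, Int.sign_mul, this]

theorem dD_R (v w t c : ℤ) :
    ev dD (v, w + 4 * t, 2 * w + 3 * t, c) = ev dD (v, w, 2 * w + 5 * t, c) := by
  have e1 : ((2 * w + 3 * t : ℤ) : FF) = 2 * ((w + 4 * t : ℤ) : FF) := by
    push_cast
    have : (5 : FF) = 0 := rfl
    linear_combination (-(t : FF)) * this
  have e2 : ((2 * w + 5 * t : ℤ) : FF) = 2 * (w : FF) := by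
    push_cast
    have : (5 : FF) = 0 := rfl
    linear_combination ((t : FF)) * this
  simp only [ev, dD, e1, e2, and_true]

theorem step1_aux {N : ℤ} :
    (∀ x, PR x → PR (sR x)) ∧ (∀ x, PR x → sR (sR x) = x) ∧ (∀ x, PR x → Q4 (sR x) = Q4 x) ∧
    (∀ x, PR x → Q4 x = N → Om4 (sR x) * (ev dD (sR x) * ku (sR x)) =
      Om4 x * ((-1) * (ev dD x * kl x))) := by
  refine ⟨?_, ?_, ?_, ?_⟩ <;> rintro ⟨v, w, u, c⟩ ⟨t, ht⟩ <;> simp only at ht <;> subst ht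
  · rw [sR_eq]; exact ⟨-t, by simp only; ring⟩
  · rw [sR_eq, sR_eq']
  · rw [sR_eq]; simp only [Q4]; ring
  · intro _
    rw [sR_eq, Om_R, dD_R]
    have : kl (v, w, 2 * w + 5 * t, c) = ku (v, w + 4 * t, 2 * w + 3 * t, c) := by
      simp only [kl, ku]
      rw [← sg_five (c - (2 * w + 3 * t))]
      congr 2; ring
    rw [this]; ring

theorem Fs_kl (N : ℤ) : Fs N (fun x => (-1) * (ev dD x * kl x)) := by
  obtain ⟨h1, h2, h3, h4⟩ := step1_aux (N := N)
  refine Fs_map sR PR _ _ h2 h3 h4 ?_ (Fs_ku N (ev dD))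
  intro x _ h
  exact PR_of (left_ne_zero_of_mul (right_ne_zero_of_mul h))

theorem step1 (N : ℤ) : S4 N (fun x => ev dD x * ku x) = S4 N (fun x => (-1) * (ev dD x * kl x)) := by
  obtain ⟨h1, h2, h3, h4⟩ := step1_aux (N := N)
  refine S4_map sR PR _ _ h1 h2 h3 h4 ?_ ?_
  · intro x _ h
    exact PR_of (left_ne_zero_of_mul h)
  · intro x _ h
    exact PR_of (left_ne_zero_of_mul (right_ne_zero_of_mul h))

/-- Step 2 kernel -/
def tau (x : Z4) : FF :=
  sg (5 * x.2.2.2 - 4 * x.2.1 - 3 * x.2.2.1) - sg (x.2.2.2 - x.2.2.1)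

theorem Fs_tau (N : ℤ) : Fs N (fun x => ev dD x * tau x) := by
  have := Fs_add (Fs_ku N (ev dD)) (Fs_kl N)
  convert this using 2
  simp only [tau, ku, kl]; ring

def mm (x : Z4) : ℤ := x.2.1 + 2 * x.2.2.1 - 2 * x.2.2.2

def b1 (p : Prop) [Decidable p] : FF := if p then 1 else 0

theorem b1_ne {p : Prop} [Decidable p] (h : b1 p ≠ 0) : p := by
  by_contra hnp
  simp [b1, hnp] at h

/-- translation by a multiple of a vector -/
def rA (x : Z4) : Z4 := (x.1, x.2.1 - 2 * mm x, x.2.2.1 - 4 * mm x, x.2.2.2 - 4 * mm x)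
def rB (x : Z4) : Z4 := (mm x, x.2.1 + (x.1 - mm x), x.2.2.1 + 2 * (x.1 - mm x),
  x.2.2.2 + 2 * (x.1 - mm x))
def rC (x : Z4) : Z4 := (- mm x, x.2.1 - (x.1 + mm x), x.2.2.1 - 2 * (x.1 + mm x),
  x.2.2.2 - 2 * (x.1 + mm x))

theorem mm_rA (x : Z4) : mm (rA x) = - mm x := by simp only [mm, rA]; ring
theorem mm_rB (x : Z4) : mm (rB x) = x.1 := by simp only [mm, rB]; ring
theorem mm_rC (x : Z4) : mm (rC x) = - x.1 := by simp only [mm, rC]; ring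

theorem rA_rA (x : Z4) : rA (rA x) = x := by
  obtain ⟨v, w, u, c⟩ := x
  simp only [mm, rA, Prod.mk.injEq, true_and]
  refine ⟨?_, ?_, ?_⟩ <;> ring
theorem rB_rB (x : Z4) : rB (rB x) = x := by
  obtain ⟨v, w, u, c⟩ := x
  simp only [mm, rB, Prod.mk.injEq]
  refine ⟨?_, ?_, ?_, ?_⟩ <;> ring
theorem rC_rC (x : Z4) : rC (rC x) = x := by
  obtain ⟨v, w, u, c⟩ := x
  simp only [mm, rC, Prod.mk.injEq]
  refine ⟨?_, ?_, ?_, ?_⟩ <;> ring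

theorem tau_rA (x : Z4) : tau (rA x) = tau x := by
  simp only [tau, rA]; congr 2 <;> ring
theorem tau_rB (x : Z4) : tau (rB x) = tau x := by
  simp only [tau, rB]; congr 2 <;> ring
theorem tau_rC (x : Z4) : tau (rC x) = tau x := by
  simp only [tau, rC]; congr 2 <;> ring

def PA (x : Z4) : Prop := P4 x ∧ (x.2.1 - x.2.2.1) % 3 = 0
def PB (x : Z4) : Prop := P4 x ∧ (x.2.1 + x.2.2.1) % 3 = 0 ∧ (x.1 - mm x) % 3 = 0
def PC (x : Z4) : Prop := P4 x ∧ (x.2.1 + x.2.2.1) % 3 = 0 ∧ (x.1 + mm x) % 3 = 0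

theorem PA_rA (x : Z4) (h : PA x) : PA (rA x) := by
  obtain ⟨v, w, u, c⟩ := x
  simp only [PA, P4, rA, mm] at *
  omega
theorem PB_rB (x : Z4) (h : PB x) : PB (rB x) := by
  obtain ⟨v, w, u, c⟩ := x
  simp only [PB, P4, rB, mm] at *
  omega
theorem PC_rC (x : Z4) (h : PC x) : PC (rC x) := by
  obtain ⟨v, w, u, c⟩ := x
  simp only [PC, P4, rC, mm] at *
  omega

theorem Om_rA (x : Z4) (h : PA x) : Om4 (rA x) = - Om4 x := by
  obtain ⟨v, w, u, c⟩ := x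
  simp only [PA, P4] at h
  have h3 : mm (v, w, u, c) % 3 = 0 := by simp only [mm]; omega
  have h2 : mm (v, w, u, c) % 2 = 1 := by simp only [mm]; omega
  simp only [Om4, rA, c12]
  obtain ⟨m, hm⟩ : ∃ m, mm (v, w, u, c) = 3 * m := ⟨mm (v, w, u, c) / 3, by omega⟩
  rw [hm]
  obtain ⟨t, rfl⟩ : ∃ t, m = 2 * t + 1 := ⟨m / 2, by omega⟩
  rw [c3_same (x := w - 2 * (3 * (2 * t + 1))) (y := w) (- 2 * (2 * t + 1)) (by ring),
    c3_same (x := u - 4 * (3 * (2 * t + 1))) (y := u) (- 4 * (2 * t + 1)) (by ring),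
    z3_same (x := c - 4 * (3 * (2 * t + 1))) (y := c) (- 4 * (2 * t + 1)) (by ring),
    c4_same (x := u - 4 * (3 * (2 * t + 1))) (y := u) (- 3 * (2 * t + 1)) (by ring),
    c4_same (x := c - 4 * (3 * (2 * t + 1))) (y := c) (- 3 * (2 * t + 1)) (by ring),
    c4_flip (x := w - 2 * (3 * (2 * t + 1))) (y := w) (- 3 * t - 2) (by ring)]
  ring

theorem Om_rB (x : Z4) (h : PB x) : Om4 (rB x) = Om4 x := by
  obtain ⟨v, w, u, c⟩ := x
  simp only [PB, P4] at h
  simp only [Om4, rB, c12]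
  have h2 : (v - mm (v, w, u, c)) % 2 = 0 := by simp only [mm]; omega
  obtain ⟨t, ht⟩ : ∃ t, v - mm (v, w, u, c) = 6 * t := ⟨(v - mm (v, w, u, c)) / 6, by omega⟩
  obtain ⟨s, hs⟩ : ∃ s, mm (v, w, u, c) = w + 4 * s := by
    refine ⟨(u - c) / 2, ?_⟩
    simp only [mm]; omega
  rw [ht]
  have e0 : c3 (mm (v, w, u, c)) = c3 v := c3_same (- 2 * t) (by linarith)
  have e1 : c4 (mm (v, w, u, c)) = c4 w := c4_same s hs
  have e2 : c4 (w + 6 * t) = c4 v := c4_same (-s) (by linarith)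
  rw [e0, e1, e2, c3_same (x := w + 6 * t) (y := w) (2 * t) (by ring),
    c3_same (x := u + 2 * (6 * t)) (y := u) (4 * t) (by ring),
    z3_same (x := c + 2 * (6 * t)) (y := c) (4 * t) (by ring),
    c4_same (x := u + 2 * (6 * t)) (y := u) (3 * t) (by ring),
    c4_same (x := c + 2 * (6 * t)) (y := c) (3 * t) (by ring)]
  ring

theorem Om_flv (x : Z4) : Om4 (flv x) = Om4 x := by simp only [Om4, flv, c12_neg]

theorem rC_flv (x : Z4) : rC x = flv (rB (flv x)) := by
  obtain ⟨v, w, u, c⟩ := x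
  refine Prod.ext ?_ (Prod.ext ?_ (Prod.ext ?_ ?_)) <;> simp only [rC, rB, flv, mm] <;> ring

theorem PC_flv (x : Z4) (h : PC x) : PB (flv x) := by
  obtain ⟨v, w, u, c⟩ := x
  simp only [PB, PC, P4, flv, mm] at *
  omega

theorem Om_rC (x : Z4) (h : PC x) : Om4 (rC x) = Om4 x := by
  rw [rC_flv, Om_flv, Om_rB _ (PC_flv x h), Om_flv]

theorem dD_rA5 : ∀ v w u c : FF,
    dD v (w - 2 * (w + 2 * u - 2 * c)) (u - 4 * (w + 2 * u - 2 * c)) (c - 4 * (w + 2 * u - 2 * c))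
      = dD v w u c := by decide +kernel
theorem dD_rB5 : ∀ v w u c : FF,
    dD (w + 2 * u - 2 * c) (w + (v - (w + 2 * u - 2 * c))) (u + 2 * (v - (w + 2 * u - 2 * c)))
      (c + 2 * (v - (w + 2 * u - 2 * c)))
      = - dD v w u c := by decide +kernel

theorem dD_rA (x : Z4) : ev dD (rA x) = ev dD x := by
  simp only [ev, rA, mm]; push_cast; exact dD_rA5 _ _ _ _
theorem dD_rB (x : Z4) : ev dD (rB x) = - ev dD x := by
  simp only [ev, rB, mm]; push_cast; exact dD_rB5 _ _ _ _
theorem dD_flv (x : Z4) : ev dD (flv x) = ev dD x := by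
  simp only [ev, flv, dD]; push_cast; rw [neg_sq]
theorem dD_rC (x : Z4) : ev dD (rC x) = - ev dD x := by
  rw [rC_flv, dD_flv, dD_rB, dD_flv]

theorem Q_rA (x : Z4) : Q4 (rA x) = Q4 x := by simp only [Q4, rA, mm]; ring
theorem Q_rB (x : Z4) : Q4 (rB x) = Q4 x := by simp only [Q4, rB, mm]; ring
theorem Q_rC (x : Z4) : Q4 (rC x) = Q4 x := by simp only [Q4, rC, mm]; ring

theorem b1_iff {p q : Prop} [Decidable p] [Decidable q] (h : p ↔ q) : b1 p = b1 q := by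
  simp [b1, h]

theorem b1_true {p : Prop} [Decidable p] (h : p) : b1 p = 1 := by
  simp [b1, h]

theorem b1_false {p : Prop} [Decidable p] (h : ¬ p) : b1 p = 0 := by
  simp [b1, h]

def bA (x : Z4) : FF := b1 ((x.2.1 - x.2.2.1) % 3 = 0)
def bB (x : Z4) : FF := b1 ((x.2.1 + x.2.2.1) % 3 = 0 ∧ (x.1 - mm x) % 3 = 0)
def bC (x : Z4) : FF := b1 ((x.2.1 + x.2.2.1) % 3 = 0 ∧ (x.1 + mm x) % 3 = 0)

theorem bABC (x : Z4) (h : P4 x) : bA x + bB x + bC x = 1 := by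
  obtain ⟨v, w, u, c⟩ := x
  simp only [P4] at h
  obtain ⟨⟨h1, h2, h3, h4⟩, h5, h6, h7, h8⟩ := h
  clear h1 h2 h3 h4
  have a1 : v % 3 = 1 ∨ v % 3 = 2 := by omega
  have a2 : w % 3 = 1 ∨ w % 3 = 2 := by omega
  have a3 : u % 3 = 1 ∨ u % 3 = 2 := by omega
  clear h5 h6 h7
  by_cases hA : (w - u) % 3 = 0
  · have e1 : bA (v, w, u, c) = 1 := b1_true hA
    have e2 : bB (v, w, u, c) = 0 := b1_false (by simp only [mm]; rcases a1 with a1 | a1 <;> rcases a2 with a2 | a2 <;> rcases a3 with a3 | a3 <;> omega)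
    have e3 : bC (v, w, u, c) = 0 := b1_false (by simp only [mm]; rcases a1 with a1 | a1 <;> rcases a2 with a2 | a2 <;> rcases a3 with a3 | a3 <;> omega)
    rw [e1, e2, e3]; ring
  · by_cases hB : (v - (w + 2 * u - 2 * c)) % 3 = 0
    · have e1 : bA (v, w, u, c) = 0 := b1_false hA
      have e2 : bB (v, w, u, c) = 1 := b1_true (by simp only [mm]; rcases a1 with a1 | a1 <;> rcases a2 with a2 | a2 <;> rcases a3 with a3 | a3 <;> omega)
      have e3 : bC (v, w, u, c) = 0 := b1_false (by simp only [mm]; rcases a1 with a1 | a1 <;> rcases a2 with a2 | a2 <;> rcases a3 with a3 | a3 <;> omega)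
      rw [e1, e2, e3]; ring
    · have e1 : bA (v, w, u, c) = 0 := b1_false hA
      have e2 : bB (v, w, u, c) = 0 := b1_false (by simp only [mm]; rcases a1 with a1 | a1 <;> rcases a2 with a2 | a2 <;> rcases a3 with a3 | a3 <;> omega)
      have e3 : bC (v, w, u, c) = 1 := b1_true (by simp only [mm]; rcases a1 with a1 | a1 <;> rcases a2 with a2 | a2 <;> rcases a3 with a3 | a3 <;> omega)
      rw [e1, e2, e3]; ring

theorem step2 (N : ℤ) : S4 N (fun x => ev dD x * tau x) = 0 := by
  have hA : S4 N (fun x => bA x * (ev dD x * tau x)) = 0 := by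
    refine S4_zero rA PA _ PA_rA (fun x _ => rA_rA x) (fun x _ => Q_rA x) ?_ ?_
    · intro x h _
      have e : bA (rA x) = bA x := by
        rw [bA, bA, b1_true h.2, b1_true (PA_rA x h).2]
      rw [Om_rA x h, e, dD_rA, tau_rA]; ring
    · intro x h h'
      exact ⟨P4_of h, b1_ne (left_ne_zero_of_mul h')⟩
  have hB : S4 N (fun x => bB x * (ev dD x * tau x)) = 0 := by
    refine S4_zero rB PB _ PB_rB (fun x _ => rB_rB x) (fun x _ => Q_rB x) ?_ ?_
    · intro x h _
      have e : bB (rB x) = bB x := by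
        rw [bB, bB, b1_true h.2, b1_true (PB_rB x h).2]
      rw [Om_rB x h, e, dD_rB, tau_rB]; ring
    · intro x h h'
      exact ⟨P4_of h, b1_ne (left_ne_zero_of_mul h')⟩
  have hC : S4 N (fun x => bC x * (ev dD x * tau x)) = 0 := by
    refine S4_zero rC PC _ PC_rC (fun x _ => rC_rC x) (fun x _ => Q_rC x) ?_ ?_
    · intro x h _
      have e : bC (rC x) = bC x := by
        rw [bC, bC, b1_true h.2, b1_true (PC_rC x h).2]
      rw [Om_rC x h, e, dD_rC, tau_rC]; ring
    · intro x h h'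
      exact ⟨P4_of h, b1_ne (left_ne_zero_of_mul h')⟩
  have fA := Fs_mul bA (Fs_tau N)
  have fB := Fs_mul bB (Fs_tau N)
  have fC := Fs_mul bC (Fs_tau N)
  have : S4 N (fun x => ev dD x * tau x) = S4 N (fun x => bA x * (ev dD x * tau x)
      + bB x * (ev dD x * tau x) + bC x * (ev dD x * tau x)) := by
    refine S4_congr fun x _ h => ?_
    have := bABC x (P4_of h)
    linear_combination (- (ev dD x * tau x)) * this
  rw [this, S4_add (Fs_add fA fB) fC, S4_add fA fB, hA, hB, hC]
  ring

theorem step12 (N : ℤ) : S4 N (fun x => ev dD x * ku x) = 0 := by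
  have h := step2 N
  have e : (fun x => ev dD x * tau x) = fun x => ev dD x * ku x + (-1) * (ev dD x * kl x) := by
    ext x; simp only [tau, ku, kl]; ring
  rw [e, S4_add (Fs_ku N _) (Fs_kl N), ← step1] at h
  apply FF_two_mul
  linear_combination h

/-! part Lat4c -/

def kj (x : Z4) : FF := sg (x.2.2.2 - x.2.2.1) - sg (x.2.2.2 - x.2.1)

theorem Fs_kj (N : ℤ) (φ : Z4 → FF) : Fs N (fun x => φ x * kj x) := by
  have := Fs_add (Fs_kw N φ) (Fs_mul (fun _ => (-1 : FF)) (Fs_ku N φ))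
  convert this using 2
  simp only [kj, ku, kw]; ring

def JJ (N : ℤ) (φ : Z4 → FF) : FF := S4 N (fun x => φ x * kj x)

theorem JJ_add (N : ℤ) (φ ψ : Z4 → FF) : JJ N (fun x => φ x + ψ x) = JJ N φ + JJ N ψ := by
  unfold JJ
  rw [← S4_add (Fs_kj N φ) (Fs_kj N ψ)]
  congr 1; ext x; ring

theorem JJ_smul (N : ℤ) (a : FF) (φ : Z4 → FF) : JJ N (fun x => a * φ x) = a * JJ N φ := by
  unfold JJ
  rw [← S4_smul]
  congr 1; ext x; ring

theorem JJ_flv (N : ℤ) (φ : Z4 → FF) : JJ N (fun x => φ (flv x)) = JJ N φ := by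
  unfold JJ
  rw [S4_flv N (fun x => φ x * kj x)]
  rfl

theorem JJ_swu (N : ℤ) (φ : Z4 → FF) : JJ N (fun x => φ (swu x)) = - JJ N φ := by
  have : JJ N φ = JJ N (fun x => (-1) * φ (swu x)) := by
    unfold JJ
    rw [S4_swu N (fun x => φ x * kj x)]
    congr 1; ext x; simp only [kj, swu]; ring
  rw [this, JJ_smul]; ring

theorem JJ_alt (N : ℤ) (φ : Z4 → FF) (h1 : ∀ x, φ (svw x) = - φ x) (h2 : ∀ x, φ (svu x) = - φ x) :
    JJ N φ = 0 := by
  have a1 : JJ N φ = S4 N (fun x => φ x * ku x + (-1) * (φ x * kv x)) := by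
    unfold JJ
    rw [S4_svw N (fun x => φ x * kj x)]
    congr 1; ext x; rw [h1]; simp only [kj, svw, ku, kv]; ring
  have a2 : JJ N φ = S4 N (fun x => φ x * kv x + (-1) * (φ x * kw x)) := by
    unfold JJ
    rw [S4_svu N (fun x => φ x * kj x)]
    congr 1; ext x; rw [h2]; simp only [kj, svu, kw, kv]; ring
  have a3 : JJ N φ = S4 N (fun x => φ x * kw x + (-1) * (φ x * ku x)) := by
    unfold JJ
    congr 1; ext x; simp only [kj, kw, ku]; ring
  rw [S4_add (Fs_ku N φ) (Fs_mul _ (Fs_kv N φ)), S4_smul] at a1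
  rw [S4_add (Fs_kv N φ) (Fs_mul _ (Fs_kw N φ)), S4_smul] at a2
  rw [S4_add (Fs_kw N φ) (Fs_mul _ (Fs_ku N φ)), S4_smul] at a3
  have : 3 * JJ N φ = 0 := by linear_combination a1 + a2 + a3
  revert this
  generalize JJ N φ = z
  revert z; decide

def X1 (v w u c : FF) : FF := pt 0 1 4 0 v w u c + pt 1 4 0 0 v w u c + pt 4 0 1 0 v w u c
  - pt 0 4 1 0 v w u c - pt 4 1 0 0 v w u c - pt 1 0 4 0 v w u c
def Y1 (v w u c : FF) : FF := - c ^ 3 * (v - w) * (w - u) * (u - v)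
def G5 (v w u c : FF) : FF := p1 v w u c - p1 v u w c + 2 * (p3 v w u c - p3 v u w c)
  - 2 * X1 v w u c - (Y1 v w u c + Y1 (-v) w u c)

theorem X1_svw : ∀ v w u c : FF, X1 w v u c = - X1 v w u c := by decide +kernel
theorem X1_svu : ∀ v w u c : FF, X1 u w v c = - X1 v w u c := by decide +kernel

theorem JJ_X1 (N : ℤ) : JJ N (ev X1) = 0 :=
  JJ_alt N _ (fun _ => X1_svw _ _ _ _) (fun _ => X1_svu _ _ _ _)
theorem JJ_Y1 (N : ℤ) : JJ N (ev Y1) = 0 :=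
  JJ_alt N _ (fun x => by simp only [ev, svw, Y1]; ring) (fun x => by simp only [ev, svu, Y1]; ring)

def k4k (x : Z4) : ℤ := x.2.2.1 + x.2.1 - x.2.2.2

def qA (x : Z4) : Z4 := (x.1, x.2.1 - 2 * k4k x, x.2.2.1 - 2 * k4k x, x.2.2.2 - 2 * k4k x)
def qB (x : Z4) : Z4 := (k4k x, x.2.1 + (x.1 - k4k x), x.2.2.1 + (x.1 - k4k x),
  x.2.2.2 + (x.1 - k4k x))
def qC (x : Z4) : Z4 := (- k4k x, x.2.1 - (x.1 + k4k x), x.2.2.1 - (x.1 + k4k x),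
  x.2.2.2 - (x.1 + k4k x))

theorem qA_qA (x : Z4) : qA (qA x) = x := by
  obtain ⟨v, w, u, c⟩ := x
  refine Prod.ext ?_ (Prod.ext ?_ (Prod.ext ?_ ?_)) <;> simp only [qA, k4k] <;> ring
theorem qB_qB (x : Z4) : qB (qB x) = x := by
  obtain ⟨v, w, u, c⟩ := x
  refine Prod.ext ?_ (Prod.ext ?_ (Prod.ext ?_ ?_)) <;> simp only [qB, k4k] <;> ring
theorem qC_qC (x : Z4) : qC (qC x) = x := by
  obtain ⟨v, w, u, c⟩ := x
  refine Prod.ext ?_ (Prod.ext ?_ (Prod.ext ?_ ?_)) <;> simp only [qC, k4k] <;> ring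

theorem kj_qA (x : Z4) : kj (qA x) = kj x := by
  simp only [kj, qA]; congr 2 <;> ring
theorem kj_qB (x : Z4) : kj (qB x) = kj x := by
  simp only [kj, qB]; congr 2 <;> ring
theorem kj_qC (x : Z4) : kj (qC x) = kj x := by
  simp only [kj, qC]; congr 2 <;> ring

theorem Q_qA (x : Z4) : Q4 (qA x) = Q4 x := by simp only [Q4, qA, k4k]; ring
theorem Q_qB (x : Z4) : Q4 (qB x) = Q4 x := by simp only [Q4, qB, k4k]; ring
theorem Q_qC (x : Z4) : Q4 (qC x) = Q4 x := by simp only [Q4, qC, k4k]; ring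

def PqA (x : Z4) : Prop := P4 x ∧ (x.2.1 + x.2.2.1) % 3 = 0
def PqB (x : Z4) : Prop := P4 x ∧ (x.2.1 - x.2.2.1) % 3 = 0 ∧ (x.1 - k4k x) % 3 = 0
def PqC (x : Z4) : Prop := P4 x ∧ (x.2.1 - x.2.2.1) % 3 = 0 ∧ (x.1 + k4k x) % 3 = 0

theorem PqA_qA (x : Z4) (h : PqA x) : PqA (qA x) := by
  obtain ⟨v, w, u, c⟩ := x
  simp only [PqA, P4, qA, k4k] at *
  omega
theorem PqB_qB (x : Z4) (h : PqB x) : PqB (qB x) := by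
  obtain ⟨v, w, u, c⟩ := x
  simp only [PqB, P4, qB, k4k] at *
  omega
theorem PqC_qC (x : Z4) (h : PqC x) : PqC (qC x) := by
  obtain ⟨v, w, u, c⟩ := x
  simp only [PqC, P4, qC, k4k] at *
  omega

theorem Om_qA (x : Z4) (h : PqA x) : Om4 (qA x) = - Om4 x := by
  obtain ⟨v, w, u, c⟩ := x
  simp only [PqA, P4] at h
  have h3 : k4k (v, w, u, c) % 3 = 0 := by simp only [k4k]; omega
  have h2 : k4k (v, w, u, c) % 2 = 1 := by simp only [k4k]; omega
  simp only [Om4, qA, c12]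
  obtain ⟨m, hm⟩ : ∃ m, k4k (v, w, u, c) = 3 * m := ⟨k4k (v, w, u, c) / 3, by omega⟩
  rw [hm]
  obtain ⟨t, rfl⟩ : ∃ t, m = 2 * t + 1 := ⟨m / 2, by omega⟩
  rw [c3_same (x := w - 2 * (3 * (2 * t + 1))) (y := w) (- 2 * (2 * t + 1)) (by ring),
    c3_same (x := u - 2 * (3 * (2 * t + 1))) (y := u) (- 2 * (2 * t + 1)) (by ring),
    z3_same (x := c - 2 * (3 * (2 * t + 1))) (y := c) (- 2 * (2 * t + 1)) (by ring),
    c4_flip (x := u - 2 * (3 * (2 * t + 1))) (y := u) (- 3 * t - 2) (by ring),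
    c4_flip (x := c - 2 * (3 * (2 * t + 1))) (y := c) (- 3 * t - 2) (by ring),
    c4_flip (x := w - 2 * (3 * (2 * t + 1))) (y := w) (- 3 * t - 2) (by ring)]
  ring

theorem Om_qB (x : Z4) (h : PqB x) : Om4 (qB x) = Om4 x := by
  obtain ⟨v, w, u, c⟩ := x
  simp only [PqB, P4] at h
  simp only [Om4, qB, c12]
  have h2 : (v - k4k (v, w, u, c)) % 2 = 0 := by simp only [k4k]; omega
  obtain ⟨t, ht⟩ : ∃ t, v - k4k (v, w, u, c) = 6 * t := ⟨(v - k4k (v, w, u, c)) / 6, by omega⟩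
  have e0 : c3 (k4k (v, w, u, c)) = c3 v := c3_same (- 2 * t) (by linarith)
  rw [ht, e0, c3_same (x := w + 6 * t) (y := w) (2 * t) (by ring),
    c3_same (x := u + 6 * t) (y := u) (2 * t) (by ring),
    z3_same (x := c + 6 * t) (y := c) (2 * t) (by ring)]
  obtain ⟨s, hs | hs⟩ : ∃ s, t = 2 * s ∨ t = 2 * s + 1 := ⟨t / 2, by omega⟩
  · subst hs
    have e1 : c4 (k4k (v, w, u, c)) = c4 v := c4_same (- 3 * s) (by linarith)
    rw [e1, c4_same (x := w + 6 * (2 * s)) (y := w) (3 * s) (by ring),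
      c4_same (x := u + 6 * (2 * s)) (y := u) (3 * s) (by ring),
      c4_same (x := c + 6 * (2 * s)) (y := c) (3 * s) (by ring)]
  · subst hs
    have e1 : c4 (k4k (v, w, u, c)) = - c4 v := c4_flip (- 3 * s - 2) (by linarith)
    rw [e1, c4_flip (x := w + 6 * (2 * s + 1)) (y := w) (3 * s + 1) (by ring),
      c4_flip (x := u + 6 * (2 * s + 1)) (y := u) (3 * s + 1) (by ring),
      c4_flip (x := c + 6 * (2 * s + 1)) (y := c) (3 * s + 1) (by ring)]
    ring

theorem qC_flv (x : Z4) : qC x = flv (qB (flv x)) := by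
  obtain ⟨v, w, u, c⟩ := x
  refine Prod.ext ?_ (Prod.ext ?_ (Prod.ext ?_ ?_)) <;> simp only [qC, qB, flv, k4k] <;> ring

theorem PqC_flv (x : Z4) (h : PqC x) : PqB (flv x) := by
  obtain ⟨v, w, u, c⟩ := x
  simp only [PqB, PqC, P4, flv, k4k] at *
  omega

theorem Om_qC (x : Z4) (h : PqC x) : Om4 (qC x) = Om4 x := by
  rw [qC_flv, Om_flv, Om_qB _ (PqC_flv x h), Om_flv]

theorem G5_qA5 : ∀ v w u c : FF, v ^ 2 + (w ^ 2 + (u ^ 2 - c ^ 2)) = 0 →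
    G5 v (w - 2 * (u + w - c)) (u - 2 * (u + w - c)) (c - 2 * (u + w - c))
      = G5 v w u c := by decide +kernel
theorem G5_qB5 : ∀ v w u c : FF, v ^ 2 + (w ^ 2 + (u ^ 2 - c ^ 2)) = 0 →
    G5 (u + w - c) (w + (v - (u + w - c))) (u + (v - (u + w - c)))
      (c + (v - (u + w - c)))
      = - G5 v w u c := by decide +kernel
theorem G5_qC5 : ∀ v w u c : FF, v ^ 2 + (w ^ 2 + (u ^ 2 - c ^ 2)) = 0 →
    G5 (-(u + w - c)) (w - (v + (u + w - c))) (u - (v + (u + w - c)))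
      (c - (v + (u + w - c)))
      = - G5 v w u c := by decide +kernel

theorem Q4_cast {N : ℤ} (hN : (N : FF) = 0) {x : Z4} (h : Q4 x = N) :
    (x.1 : FF) ^ 2 + ((x.2.1 : FF) ^ 2 + ((x.2.2.1 : FF) ^ 2 - (x.2.2.2 : FF) ^ 2)) = 0 := by
  rw [← hN, ← h]; simp only [Q4]; push_cast; ring

theorem G5_qA {N : ℤ} (hN : (N : FF) = 0) {x : Z4} (h : Q4 x = N) : ev G5 (qA x) = ev G5 x := by
  have := Q4_cast hN h
  simp only [ev, qA, k4k]; push_cast; exact G5_qA5 _ _ _ _ this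
theorem G5_qB {N : ℤ} (hN : (N : FF) = 0) {x : Z4} (h : Q4 x = N) : ev G5 (qB x) = - ev G5 x := by
  have := Q4_cast hN h
  simp only [ev, qB, k4k]; push_cast; exact G5_qB5 _ _ _ _ this
theorem G5_qC {N : ℤ} (hN : (N : FF) = 0) {x : Z4} (h : Q4 x = N) : ev G5 (qC x) = - ev G5 x := by
  have := Q4_cast hN h
  simp only [ev, qC, k4k]; push_cast; exact G5_qC5 _ _ _ _ this

def dA (x : Z4) : FF := b1 ((x.2.1 + x.2.2.1) % 3 = 0)
def dB (x : Z4) : FF := b1 ((x.2.1 - x.2.2.1) % 3 = 0 ∧ (x.1 - k4k x) % 3 = 0)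
def dC (x : Z4) : FF := b1 ((x.2.1 - x.2.2.1) % 3 = 0 ∧ (x.1 + k4k x) % 3 = 0)

theorem dABC (x : Z4) (h : P4 x) : dA x + dB x + dC x = 1 := by
  obtain ⟨v, w, u, c⟩ := x
  simp only [P4] at h
  obtain ⟨⟨h1, h2, h3, h4⟩, h5, h6, h7, h8⟩ := h
  clear h1 h2 h3 h4
  have a1 : v % 3 = 1 ∨ v % 3 = 2 := by omega
  have a2 : w % 3 = 1 ∨ w % 3 = 2 := by omega
  have a3 : u % 3 = 1 ∨ u % 3 = 2 := by omega
  clear h5 h6 h7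
  by_cases hA : (w + u) % 3 = 0
  · have e1 : dA (v, w, u, c) = 1 := b1_true hA
    have e2 : dB (v, w, u, c) = 0 := b1_false (by simp only [k4k]; rcases a1 with a1 | a1 <;> rcases a2 with a2 | a2 <;> rcases a3 with a3 | a3 <;> omega)
    have e3 : dC (v, w, u, c) = 0 := b1_false (by simp only [k4k]; rcases a1 with a1 | a1 <;> rcases a2 with a2 | a2 <;> rcases a3 with a3 | a3 <;> omega)
    rw [e1, e2, e3]; ring
  · by_cases hB : (v - (u + w - c)) % 3 = 0
    · have e1 : dA (v, w, u, c) = 0 := b1_false hA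
      have e2 : dB (v, w, u, c) = 1 := b1_true (by simp only [k4k]; rcases a1 with a1 | a1 <;> rcases a2 with a2 | a2 <;> rcases a3 with a3 | a3 <;> omega)
      have e3 : dC (v, w, u, c) = 0 := b1_false (by simp only [k4k]; rcases a1 with a1 | a1 <;> rcases a2 with a2 | a2 <;> rcases a3 with a3 | a3 <;> omega)
      rw [e1, e2, e3]; ring
    · have e1 : dA (v, w, u, c) = 0 := b1_false hA
      have e2 : dB (v, w, u, c) = 0 := b1_false (by simp only [k4k]; rcases a1 with a1 | a1 <;> rcases a2 with a2 | a2 <;> rcases a3 with a3 | a3 <;> omega)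
      have e3 : dC (v, w, u, c) = 1 := b1_true (by simp only [k4k]; rcases a1 with a1 | a1 <;> rcases a2 with a2 | a2 <;> rcases a3 with a3 | a3 <;> omega)
      rw [e1, e2, e3]; ring

theorem JJ_G5 (N : ℤ) (hN : (N : FF) = 0) : JJ N (ev G5) = 0 := by
  have hA : S4 N (fun x => dA x * (ev G5 x * kj x)) = 0 := by
    refine S4_zero qA PqA _ PqA_qA (fun x _ => qA_qA x) (fun x _ => Q_qA x) ?_ ?_
    · intro x h hx
      have e : dA (qA x) = dA x := by
        rw [dA, dA, b1_true h.2, b1_true (PqA_qA x h).2]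
      rw [Om_qA x h, e, G5_qA hN hx, kj_qA]; ring
    · intro x h h'
      exact ⟨P4_of h, b1_ne (left_ne_zero_of_mul h')⟩
  have hB : S4 N (fun x => dB x * (ev G5 x * kj x)) = 0 := by
    refine S4_zero qB PqB _ PqB_qB (fun x _ => qB_qB x) (fun x _ => Q_qB x) ?_ ?_
    · intro x h hx
      have e : dB (qB x) = dB x := by
        rw [dB, dB, b1_true h.2, b1_true (PqB_qB x h).2]
      rw [Om_qB x h, e, G5_qB hN hx, kj_qB]; ring
    · intro x h h'
      exact ⟨P4_of h, b1_ne (left_ne_zero_of_mul h')⟩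
  have hC : S4 N (fun x => dC x * (ev G5 x * kj x)) = 0 := by
    refine S4_zero qC PqC _ PqC_qC (fun x _ => qC_qC x) (fun x _ => Q_qC x) ?_ ?_
    · intro x h hx
      have e : dC (qC x) = dC x := by
        rw [dC, dC, b1_true h.2, b1_true (PqC_qC x h).2]
      rw [Om_qC x h, e, G5_qC hN hx, kj_qC]; ring
    · intro x h h'
      exact ⟨P4_of h, b1_ne (left_ne_zero_of_mul h')⟩
  have fA := Fs_mul dA (Fs_kj N (ev G5))
  have fB := Fs_mul dB (Fs_kj N (ev G5))
  have fC := Fs_mul dC (Fs_kj N (ev G5))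
  have : JJ N (ev G5) = S4 N (fun x => dA x * (ev G5 x * kj x)
      + dB x * (ev G5 x * kj x) + dC x * (ev G5 x * kj x)) := by
    refine S4_congr fun x _ h => ?_
    have := dABC x (P4_of h)
    linear_combination (- (ev G5 x * kj x)) * this
  rw [this, S4_add (Fs_add fA fB) fC, S4_add fA fB, hA, hB, hC]
  ring

/-- swapped versions -/
theorem JJ_p (N : ℤ) (hN : (N : FF) = 0) : JJ N (fun x => ev p1 x + 2 * ev p3 x) = 0 := by
  have hG := JJ_G5 N hN
  have e : ev G5 = fun x => (ev p1 x + 2 * ev p3 x) + ((-1) * (ev p1 (swu x) + 2 * ev p3 (swu x))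
      + ((-2) * ev X1 x + ((-1) * ev Y1 x + (-1) * ev Y1 (flv x)))) := by
    ext x
    simp only [ev, G5, swu, flv]
    push_cast; ring
  rw [e, JJ_add N (fun x => ev p1 x + 2 * ev p3 x),
    JJ_add N (fun x => (-1) * (ev p1 (swu x) + 2 * ev p3 (swu x))),
    JJ_add N (fun x => (-2) * ev X1 x), JJ_add N (fun x => (-1) * ev Y1 x),
    JJ_smul, JJ_smul, JJ_smul, JJ_smul, JJ_flv N (ev Y1), JJ_Y1, JJ_X1,
    JJ_swu N (fun x => ev p1 x + 2 * ev p3 x)] at hG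
  apply FF_two_mul
  linear_combination hG

def Phi (v w u c : FF) : FF := p1 v w u c + p2 v w u c + p3 v w u c - p3 v u w c

theorem Phi_ne : ∀ v w u c : FF, Phi v w u c ≠ 0 → v ^ 2 + (w ^ 2 + (u ^ 2 - c ^ 2)) = 0 := by
  decide +kernel

theorem lattice4 (N : ℤ) : S4 N (fun x => ev Phi x * ku x) = 0 := by
  by_cases hN : (N : FF) = 0
  swap
  · have : S4 N (fun x => ev Phi x * ku x) = S4 N (fun x => (0 : FF) * ku x) := by
      refine S4_congr fun x hx _ => ?_
      have : ev Phi x = 0 := by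
        by_contra h
        have := Phi_ne _ _ _ _ h
        apply hN
        rw [← hx]; simp only [Q4]; push_cast; exact this
      rw [this]
    rw [this, S4_smul, zero_mul]
  have s12 := step12 N
  have s12' : S4 N (fun x => ev dD (flw x) * ku x) = 0 := by
    rw [← s12, S4_flw N (fun x => ev dD x * ku x)]; rfl
  have F := Fs_ku N
  have e1 : S4 N (fun x => 2 * (ev p2 x * ku x) + (ev p1 x * ku x + ev p1 (swu x) * ku x)) = 0 := by
    have : S4 N (fun x => ev dD x * ku x + ev dD (flw x) * ku x) = 0 := by
      rw [S4_add (F _) (F (fun x => ev dD (flw x))), s12, s12', add_zero]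
    rw [← this]; congr 1; ext x
    have := dD_flip (x.1 : FF) x.2.1 x.2.2.1 x.2.2.2
    simp only [ev, flw, swu]; push_cast
    linear_combination (- ku x) * this
  rw [S4_add (Fs_mul (fun _ => 2) (F _)) (Fs_add (F _) (F (fun x => ev p1 (swu x)))),
    S4_add (F _) (F (fun x => ev p1 (swu x))), S4_smul] at e1
  have e2 : S4 N (fun x => ev p1 (swu x) * ku x) = S4 N (fun x => ev p1 x * kw x) := by
    rw [S4_swu N (fun x => ev p1 x * kw x)]; rfl
  have e3 : S4 N (fun x => ev p3 (swu x) * ku x) = S4 N (fun x => ev p3 x * kw x) := by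
    rw [S4_swu N (fun x => ev p3 x * kw x)]; rfl
  have e4 : S4 N (fun x => ev Phi x * ku x) = S4 N (fun x => ev p1 x * ku x) +
      (S4 N (fun x => ev p2 x * ku x) + (S4 N (fun x => ev p3 x * ku x)
        + (-1) * S4 N (fun x => ev p3 (swu x) * ku x))) := by
    rw [← S4_smul, ← S4_add (F _) (Fs_mul (fun _ => (-1)) (F (fun x => ev p3 (swu x)))),
      ← S4_add (F _) (Fs_add (F _) (Fs_mul (fun _ => (-1)) (F (fun x => ev p3 (swu x))))),
      ← S4_add (F _) (Fs_add (F _) (Fs_add (F _)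
        (Fs_mul (fun _ => (-1)) (F (fun x => ev p3 (swu x))))))]
    congr 1; ext x; simp only [ev, Phi, swu]; ring
  have e5 : JJ N (fun x => ev p1 x + 2 * ev p3 x) = (S4 N (fun x => ev p1 x * kw x) +
      (-1) * S4 N (fun x => ev p1 x * ku x)) + (2 * S4 N (fun x => ev p3 x * kw x) +
      (-2) * S4 N (fun x => ev p3 x * ku x)) := by
    have W := Fs_kw N
    rw [← S4_smul, ← S4_smul, ← S4_smul, ← S4_add (W _) (Fs_mul (fun _ => (-1)) (F _)),
      ← S4_add (Fs_mul (fun _ => 2) (W _)) (Fs_mul (fun _ => (-2)) (F _)),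
      ← S4_add (Fs_add (W _) (Fs_mul (fun _ => (-1)) (F _)))
       (Fs_add (Fs_mul (fun _ => 2) (W _)) (Fs_mul (fun _ => (-2)) (F _)))]
    unfold JJ
    congr 1; ext x; simp only [kj, ku, kw]; ring
  rw [JJ_p N hN] at e5
  apply FF_two_mul
  rw [e4]
  rw [e2] at e1
  rw [e3]
  linear_combination e1 + e5

/-! part Ser -/

theorem gs_add {ι : Type*} {E : ι → ℤ} {w w' : ι → FF} (h : Adm E w) (h' : Adm E w') :
    gs E (fun i => w i + w' i) = gs E w + gs E w' := by
  ext n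
  rw [map_add, coeff_gs, coeff_gs, coeff_gs, ← finsum_add_distrib (h.fin n) (h'.fin n)]
  refine finsum_congr fun i => ?_
  split_ifs <;> simp

theorem gs_smul {ι : Type*} (E : ι → ℤ) (w : ι → FF) (a : FF) :
    gs E (fun i => a * w i) = C a * gs E w := by
  ext n
  rw [coeff_C_mul, coeff_gs, coeff_gs, mul_finsum]
  refine finsum_congr fun i => ?_
  split_ifs <;> simp

theorem Adm.mono {ι : Type*} {E : ι → ℤ} {w w' : ι → FF} (h : Adm E w)
    (hw : ∀ i, w' i ≠ 0 → w i ≠ 0) : Adm E w' :=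
  ⟨fun N => (h.1 N).subset fun i hi => ⟨hi.1, hw i hi.2⟩, fun i hi => h.2 i (hw i hi)⟩

theorem gs_inj {ι κ : Type*} (e : κ → ι) (he : Function.Injective e) (E : ι → ℤ) (w : ι → FF)
    (h : ∀ i, w i ≠ 0 → i ∈ Set.range e) :
    gs E w = gs (fun j => E (e j)) (fun j => w (e j)) := by
  classical
  ext n
  rw [coeff_gs, coeff_gs, ← finsum_mem_range (f := fun i => if E i = (n : ℤ) then w i else 0) he]
  refine finsum_congr fun i => ?_
  by_cases hi : i ∈ Set.range e
  · rw [finsum_eq_if, if_pos hi]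
  · rw [finsum_eq_if, if_neg hi]
    have : w i = 0 := by by_contra h'; exact hi (h i h')
    simp [this]

theorem Adm_sq (w : ℤ → FF) : Adm (fun u : ℤ => u ^ 2) w := by
  constructor
  · intro N
    refine (Set.finite_Icc (-(N : ℤ)) N).subset ?_
    rintro u ⟨h, _⟩
    exact abs_le.mp (abs_le_of_sq h)
  · intro i _; positivity

theorem Adm_3sq (w : ℤ → FF) : Adm (fun u : ℤ => 3 * u ^ 2) w := by
  constructor
  · intro N
    refine (Set.finite_Icc (-(N : ℤ)) N).subset ?_
    rintro u ⟨h, _⟩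
    simp only at h
    exact abs_le.mp (abs_le_of_sq (by nlinarith))
  · intro i _; positivity

theorem fin2 (S : Set (ℤ × ℤ)) (f g : ℤ × ℤ → ℤ) (M : ℤ)
    (H : ∀ x y, f x = f y → g x = g y → x = y)
    (hb : ∀ x ∈ S, |f x| ≤ M ∧ |g x| ≤ M) : S.Finite := by
  refine finite_of_bdd 2 (fun x => ![f x, g x]) ?_ S M ?_
  · intro x y hxy
    have h0 := congrFun hxy 0
    have h1 := congrFun hxy 1
    simp at h0 h1
    exact H x y h0 h1
  · intro x hx i
    have := hb x hx
    fin_cases i <;> simp [this]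

def ind (r : FF) (u : ℤ) : FF := if (u : FF) ^ 2 = r then 1 else 0

def TH : FF⟦X⟧ := gs (fun u : ℤ => u ^ 2) c12
def th (r : FF) : FF⟦X⟧ := gs (fun u : ℤ => u ^ 2) (fun u => c12 u * ind r u)

def EK (p : ℤ × ℤ) : ℤ := p.1 ^ 2 - p.2 ^ 2
def wK (p : ℤ × ℤ) : FF := c12 p.1 * (c4 p.2 * z3 p.2) * (sg p.2 - sg (p.2 - p.1))
def KK : FF⟦X⟧ := gs EK wK
def K (r s : FF) : FF⟦X⟧ := gs EK (fun p => wK p * (ind r p.1 * ind s p.2))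

theorem Adm_K : Adm EK wK := by
  have key : ∀ p : ℤ × ℤ, wK p ≠ 0 → 0 < p.2 * (p.1 - p.2) ∧ |p.2| ≤ p.2 * (p.1 - p.2) := by
    rintro ⟨u, c⟩ h
    unfold wK at h
    have h1 := left_ne_zero_of_mul h
    have hu := c12_ne (left_ne_zero_of_mul h1)
    have hc := c4_ne (left_ne_zero_of_mul (right_ne_zero_of_mul h1))
    have hz := z3_ne (right_ne_zero_of_mul (right_ne_zero_of_mul h1))
    simp only at *
    have := sg_sub_ne (by omega) (by omega) (right_ne_zero_of_mul h)
    rcases this with ⟨a, b⟩ | ⟨a, b⟩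
    · rw [abs_of_pos a]; constructor <;> nlinarith
    · rw [abs_of_neg a]; constructor <;> nlinarith
  constructor
  · intro N
    refine fin2 _ (fun p => p.1 - p.2) (fun p => p.2) N ?_ ?_
    · rintro ⟨u, c⟩ ⟨u', c'⟩ h1 h2
      simp only at h1 h2
      subst h2
      simp only [Prod.mk.injEq, and_true]; omega
    · rintro ⟨u, c⟩ ⟨h1, h2⟩
      have := key _ h2
      simp only [EK] at *
      constructor
      · refine abs_le_of_sq ?_
        nlinarith
      · nlinarith [sq_nonneg (u - c)]
  · rintro ⟨u, c⟩ h
    have := key _ h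
    simp only [EK] at *
    nlinarith [sq_nonneg (u - c)]

theorem Adm_Krs (r s : FF) : Adm EK (fun p => wK p * (ind r p.1 * ind s p.2)) :=
  Adm_K.mono fun _ h => left_ne_zero_of_mul h

theorem ind_sum (u : ℤ) : ind 0 u + ind 1 u + ind 4 u = 1 := by
  have : ∀ z : FF, ((if z ^ 2 = 0 then 1 else 0) + (if z ^ 2 = 1 then 1 else 0)
    + (if z ^ 2 = 4 then 1 else 0) : FF) = 1 := by decide
  exact this u

theorem TH_eq : TH = th 0 + th 1 + th 4 := by
  unfold th
  rw [← gs_add (Adm_sq _) (Adm_sq _), ← gs_add (Adm_sq _) (Adm_sq _), TH]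
  congr 1; ext u
  linear_combination (- c12 u) * ind_sum u

theorem KK_eq : KK = (K 0 0 + K 0 1 + K 0 4) + (K 1 0 + K 1 1 + K 1 4)
    + (K 4 0 + K 4 1 + K 4 4) := by
  have A := Adm_Krs
  have A3 : ∀ r, Adm EK (fun p => wK p * ind r p.1) := fun r =>
    Adm_K.mono fun _ h => left_ne_zero_of_mul h
  have h1 : ∀ r, K r 0 + K r 1 + K r 4 = gs EK (fun p => wK p * ind r p.1) := by
    intro r
    unfold K
    rw [← gs_add (A r 0) (A r 1), ← gs_add _ (A r 4)]
    · congr 1; ext p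
      linear_combination (wK p * ind r p.1) * ind_sum p.2
    · exact (A3 r).mono fun p h => by
        intro h0; apply h
        linear_combination (ind 0 p.2 + ind 1 p.2) * h0
  rw [h1, h1, h1, ← gs_add (A3 0) (A3 1), ← gs_add _ (A3 4), KK]
  · congr 1; ext p
    linear_combination (- wK p) * ind_sum p.1
  · exact Adm_K.mono fun p h => by
      intro h0; apply h
      linear_combination (ind 0 p.1 + ind 1 p.1) * h0

theorem coeff_R2 (i j k l : FF) (n : ℕ) : coeff n (th i * (th j * K k l)) =
    S4 n (fun x => ev (pt i j k l) x * ku x) := by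
  unfold th K
  rw [gs_mul (Adm_sq _) (Adm_Krs k l), gs_mul (Adm_sq _) ((Adm_sq (fun u => c12 u * ind j u)).mul (Adm_Krs k l)), coeff_gs]
  unfold S4
  refine finsum_congr fun x => ?_
  unfold T4
  have hQ : x.1 ^ 2 + (x.2.1 ^ 2 + EK x.2.2) = Q4 x := rfl
  rw [hQ]
  by_cases h : Q4 x = (n : ℤ)
  · rw [if_pos h, if_pos h]
    have : ev (pt i j k l) x = ind i x.1 * (ind j x.2.1 * (ind k x.2.2.1 * ind l x.2.2.2)) := by
      simp only [ev, pt, ind]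
      by_cases h1 : (x.1 : FF) ^ 2 = i
      · by_cases h2 : (x.2.1 : FF) ^ 2 = j
        · by_cases h3 : (x.2.2.1 : FF) ^ 2 = k
          · simp [h1, h2, h3]
          · simp [h3]
        · simp [h2]
      · simp [h1]
    simp only [this, Om4, wK, ku]; ring
  · rw [if_neg h, if_neg h]

theorem R2 : th 1 * (th 1 * K 4 1) - th 4 * (th 4 * K 1 4) + th 1 * (th 0 * K 0 1)
    - th 4 * (th 0 * K 0 4) + th 0 * (th 1 * K 4 0) - th 0 * (th 4 * K 1 0) = 0 := by
  ext n
  simp only [map_sub, map_add, coeff_R2, map_zero]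
  refine Eq.trans ?_ (lattice4 n)
  have F := Fs_ku (n : ℤ)
  have e : ∀ p q : Z4 → FF, S4 n (fun x => p x * ku x) - S4 n (fun x => q x * ku x) =
      S4 n (fun x => (p x - q x) * ku x) := by
    intro p q
    have h1 := S4_smul n (-1) (fun x => q x * ku x)
    have h2 := S4_add (F p) (Fs_mul (fun _ => (-1)) (F q))
    rw [h1] at h2
    have h3 : S4 n (fun x => (p x - q x) * ku x) =
      S4 n (fun y => p y * ku y + (-1) * (q y * ku y)) := by
      congr 1; ext x; ring
    rw [h3, h2]; ring
  have e' : ∀ p q : Z4 → FF, S4 n (fun x => p x * ku x) + S4 n (fun x => q x * ku x) =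
      S4 n (fun x => (p x + q x) * ku x) := by
    intro p q
    rw [← S4_add (F p) (F q)]
    congr 1; ext x; ring
  rw [e, e', e (fun x => ev (pt 1 1 4 1) x - ev (pt 4 4 1 4) x + ev (pt 1 0 0 1) x),
    e' (fun x => ev (pt 1 1 4 1) x - ev (pt 4 4 1 4) x + ev (pt 1 0 0 1) x - ev (pt 4 0 0 4) x),
    e (fun x => ev (pt 1 1 4 1) x - ev (pt 4 4 1 4) x + ev (pt 1 0 0 1) x - ev (pt 4 0 0 4) x
      + ev (pt 0 1 4 0) x)]
  congr 1; ext x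
  have : pt 0 1 4 0 (x.1 : FF) x.2.2.1 x.2.1 x.2.2.2 = pt 0 4 1 0 (x.1 : FF) x.2.1 x.2.2.1 x.2.2.2 := by
    simp only [pt]; congr 1; apply propext; tauto
  simp only [ev, Phi, p1, p2, p3, this]; ring

/-- the theta relation -/
def qR (x : ℤ × ℤ) : ℤ × ℤ :=
  (x.1 + 4 * ((x.2 - 2 * x.1) / 5), x.2 - 2 * ((x.2 - 2 * x.1) / 5))

theorem R1_aux (n : ℤ) : ∑ᶠ x : ℤ × ℤ, (if x.1 ^ 2 + x.2 ^ 2 = n then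
    c12 x.1 * c12 x.2 * (if (x.2 : FF) = 2 * (x.1 : FF) then 1 else 0) else 0 : FF) = 0 := by
  have hq : ∀ w t : ℤ, qR (w, 2 * w + 5 * t) = (w + 4 * t, 2 * w + 3 * t) := by
    intro w t
    have : (2 * w + 5 * t - 2 * w) / 5 = t := by omega
    simp only [qR, this, Prod.mk.injEq, true_and]; ring
  refine finsum_invol_neg qR (fun x => ∃ t : ℤ, x.2 = 2 * x.1 + 5 * t) _ ?_ ?_ ?_ ?_
  · rintro ⟨w, u⟩ ⟨t, ht⟩
    simp only at ht; subst ht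
    rw [hq]; exact ⟨-t, by simp only; ring⟩
  · rintro ⟨w, u⟩ ⟨t, ht⟩
    simp only at ht; subst ht
    have := hq (w + 4 * t) (-t)
    have e : 2 * (w + 4 * t) + 5 * (-t) = 2 * w + 3 * t := by ring
    rw [e] at this
    rw [hq, this]
    simp only [Prod.mk.injEq]; constructor <;> ring
  · rintro ⟨w, u⟩ ⟨t, ht⟩
    simp only at ht; subst ht
    rw [hq]
    simp only
    have e5 : (5 : FF) = 0 := rfl
    have e0 : (w + 4 * t) ^ 2 + (2 * w + 3 * t) ^ 2 = w ^ 2 + (2 * w + 5 * t) ^ 2 := by ring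
    have e1 : ((2 * w + 3 * t : ℤ) : FF) = 2 * ((w + 4 * t : ℤ) : FF) := by
      push_cast
      linear_combination (-(t : FF)) * e5
    have e2 : ((2 * w + 5 * t : ℤ) : FF) = 2 * (w : FF) := by
      push_cast
      linear_combination ((t : FF)) * e5
    rw [e0, if_pos e1, if_pos e2]
    have e3 : ∀ w t : ZMod 3, f3 (w + 4 * t) * f3 (2 * w + 3 * t) = f3 w * f3 (2 * w + 5 * t) := by
      decide
    have e4 : ∀ w t : ZMod 4, f4 (w + 4 * t) * f4 (2 * w + 3 * t) = - (f4 w * f4 (2 * w + 5 * t)) := by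
      decide
    have e3' : c3 (w + 4 * t) * c3 (2 * w + 3 * t) = c3 w * c3 (2 * w + 5 * t) := by
      simpa [c3] using e3 w t
    have e4' : c4 (w + 4 * t) * c4 (2 * w + 3 * t) = - (c4 w * c4 (2 * w + 5 * t)) := by
      simpa [c4] using e4 w t
    have : c12 (w + 4 * t) * c12 (2 * w + 3 * t) = - (c12 w * c12 (2 * w + 5 * t)) := by
      simp only [c12]
      linear_combination (c4 (w + 4 * t) * c4 (2 * w + 3 * t)) * e3'
        + (c3 w * c3 (2 * w + 5 * t)) * e4'
    rw [this]
    split_ifs <;> ring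
  · rintro ⟨w, u⟩ h
    simp only at h
    have h1 : (u : FF) = 2 * (w : FF) := by
      by_contra h'
      rw [if_neg h'] at h
      simp at h
    have h2 : ((u - 2 * w : ℤ) : FF) = 0 := by push_cast; rw [h1]; ring
    obtain ⟨t, ht⟩ := (ZMod.intCast_zmod_eq_zero_iff_dvd _ 5).mp h2
    exact ⟨t, by simp only; push_cast at ht; linarith⟩

theorem R1 : th 1 * th 4 = - (th 0 * th 0) := by
  have A : ∀ f g : ℤ → FF, Adm (fun p : ℤ × ℤ => p.1 ^ 2 + p.2 ^ 2) (fun p => f p.1 * g p.2) :=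
    fun f g => (Adm_sq f).mul (Adm_sq g)
  have A1 : Adm (fun p : ℤ × ℤ => p.1 ^ 2 + p.2 ^ 2) (fun p => c12 p.1 * c12 p.2) := A c12 c12
  have A' : ∀ q : ℤ × ℤ → FF, Adm (fun p : ℤ × ℤ => p.1 ^ 2 + p.2 ^ 2)
      (fun p => c12 p.1 * c12 p.2 * q p) := fun q => A1.mono fun p h => left_ne_zero_of_mul h
  have z1 : gs (fun p : ℤ × ℤ => p.1 ^ 2 + p.2 ^ 2) (fun p => c12 p.1 * c12 p.2 *
      (if (p.2 : FF) = 2 * (p.1 : FF) then 1 else 0)) = 0 := by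
    ext n; rw [coeff_gs, R1_aux]; simp
  have z2 : gs (fun p : ℤ × ℤ => p.1 ^ 2 + p.2 ^ 2) (fun p => c12 p.1 * c12 p.2 *
      (if (p.2 : FF) = - (2 * (p.1 : FF)) then 1 else 0)) = 0 := by
    rw [← z1, gs_inj (fun p : ℤ × ℤ => (-p.1, p.2))]
    · simp only [c12_neg, neg_sq]; push_cast; simp only [mul_neg, neg_neg]
    · rintro ⟨a, b⟩ ⟨a', b'⟩ h
      simpa using h
    · rintro ⟨a, b⟩ _
      exact ⟨(-a, b), by simp⟩
  have s1 : ∀ r s, th r * th s = gs (fun p : ℤ × ℤ => p.1 ^ 2 + p.2 ^ 2)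
      (fun p => c12 p.1 * c12 p.2 * (ind r p.1 * ind s p.2)) := by
    intro r s
    unfold th
    rw [gs_mul (Adm_sq _) (Adm_sq _)]
    congr 1; ext p; ring
  have s2 : th 0 * th 0 + th 0 * th 0 + (th 1 * th 4 + th 4 * th 1) = 0 := by
    rw [s1, s1, s1, ← gs_add (A' _) (A' _), ← gs_add (A' _) (A' _)]
    have t1 := gs_add (A' (fun p => if (p.2 : FF) = 2 * (p.1 : FF) then 1 else 0))
      (A' (fun p => if (p.2 : FF) = - (2 * (p.1 : FF)) then 1 else 0))
    rw [z1, z2, add_zero] at t1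
    have dd : ∀ w u : FF, ((if u = 2 * w then 1 else 0) + (if u = -(2 * w) then 1 else 0) : FF) =
      2 * ((if w ^ 2 = 0 then 1 else 0) * (if u ^ 2 = 0 then 1 else 0)) +
      (if w ^ 2 = 1 then 1 else 0) * (if u ^ 2 = 4 then 1 else 0) +
      (if w ^ 2 = 4 then 1 else 0) * (if u ^ 2 = 1 then 1 else 0) := by decide
    rw [← gs_add, ← t1]
    · congr 1; ext p
      have := dd (p.1 : FF) (p.2 : FF)
      simp only [ind]
      linear_combination (- (c12 p.1 * c12 p.2)) * this
    · exact (A' (fun p => ind 0 p.1 * ind 0 p.2 + ind 0 p.1 * ind 0 p.2)).mono fun p h => by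
        rwa [mul_add]
    · exact (A' (fun p => ind 1 p.1 * ind 4 p.2 + ind 4 p.1 * ind 1 p.2)).mono fun p h => by
        rwa [mul_add]
  have c2 : (C (3 : FF)) * C (2 : FF) = (1 : FF⟦X⟧) := by
    rw [← map_mul]; exact map_one C
  have e2 : (C (2 : FF) : FF⟦X⟧) = 2 := map_ofNat C 2
  rw [e2] at c2
  linear_combination (C (3 : FF)) * s2 - (th 0 * th 0 + th 1 * th 4) * c2

/-! part Ser2 -/

def J2 : FF⟦X⟧ := gs (fun b : ℤ => 3 * b ^ 2) (fun b => c4 b * (b : FF))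
def EH (p : ℤ × ℤ) : ℤ := 3 * p.1 ^ 2 - 9 * p.2 ^ 2
def wH (p : ℤ × ℤ) : FF := c4 p.1 * c4 p.2 *
  (((p.1 - 2 * p.2 : ℤ) : FF) * (sg p.2 + sg (p.1 - 2 * p.2)))
def H4 : FF⟦X⟧ := gs EH wH

theorem wH_key {p : ℤ × ℤ} (h : wH p ≠ 0) :
    (0 < p.2 ∧ 0 < p.1 - 2 * p.2) ∨ (p.2 < 0 ∧ p.1 - 2 * p.2 < 0) := by
  obtain ⟨b, d⟩ := p
  unfold wH at h
  have h1 := left_ne_zero_of_mul h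
  have hb := c4_ne (left_ne_zero_of_mul h1)
  have hd := c4_ne (right_ne_zero_of_mul h1)
  simp only at *
  exact sg_add_ne (by omega) (by omega) (right_ne_zero_of_mul (right_ne_zero_of_mul h))

theorem Adm_H : Adm EH wH := by
  have key : ∀ p : ℤ × ℤ, wH p ≠ 0 → 0 < p.2 * (p.1 - 2 * p.2) := by
    intro p h
    rcases wH_key h with ⟨a, b⟩ | ⟨a, b⟩ <;> nlinarith
  constructor
  · intro N
    refine fin2 _ (fun p => p.1 - 2 * p.2) (fun p => p.2) N ?_ ?_
    · rintro ⟨u, c⟩ ⟨u', c'⟩ h1 h2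
      simp only at h1 h2
      subst h2
      simp only [Prod.mk.injEq, and_true]; omega
    · rintro ⟨b, d⟩ ⟨h1, h2⟩
      have := key _ h2
      simp only [EH] at *
      constructor
      · refine abs_le_of_sq ?_
        nlinarith [sq_nonneg (b - 2 * d), sq_nonneg d]
      · refine abs_le_of_sq ?_
        nlinarith [sq_nonneg (b - 2 * d), sq_nonneg d]
  · rintro ⟨b, d⟩ h
    have := key _ h
    simp only [EH] at *
    nlinarith [sq_nonneg (b - 2 * d), sq_nonneg d]

theorem sg_three (x : ℤ) : sg (3 * x) = sg x := by
  have : Int.sign 3 = 1 := rfl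
  simp [sg, Int.sign_mul, this]

theorem c4_three (x : ℤ) : c4 (3 * x) = - c4 x := by
  have : ∀ z : ZMod 4, f4 (3 * z) = - f4 z := by decide
  simp [c4, this]

theorem z3_three (x : ℤ) : z3 (3 * x) = 1 := by
  have : (3 : ZMod 3) = 0 := rfl
  simp [z3, this]

theorem R3 : TH * H4 = - (J2 * KK) := by
  have e1 : TH * H4 = gs Q3 (fun x => Om3 x * (((x.2.1 - 2 * x.2.2 : ℤ) : FF) *
      (sg x.2.2 + sg (x.2.1 - 2 * x.2.2)))) := by
    unfold TH H4
    rw [gs_mul (Adm_sq _) Adm_H]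
    congr 1
    · ext x; simp only [Q3, EH]; ring
    · ext x; simp only [Om3, wH]; ring
  have e2 : J2 * KK = gs Q3 (fun x => (-1) * (Om3 x * ((x.2.1 : FF) * k1 x))) := by
    unfold J2 KK
    rw [gs_mul (Adm_3sq _) Adm_K, gs_inj (fun x : Z3 => (x.2.1, (x.1, 3 * x.2.2)))]
    · congr 1
      · ext x; simp only [Q3, EK]; ring
      · ext x
        have : 3 * x.2.2 - x.1 = - (x.1 - 3 * x.2.2) := by ring
        simp only [Om3, wK, k1, sg_three, c4_three, z3_three, this, sg_neg]; ring
    · rintro ⟨u, b, d⟩ ⟨u', b', d'⟩ h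
      simp only [Prod.mk.injEq] at h
      obtain ⟨h1, h2, h3⟩ := h
      subst h1 h2
      simp only [Prod.mk.injEq, true_and]; omega
    · rintro ⟨b, u, c⟩ h
      have h := right_ne_zero_of_mul h
      unfold wK at h
      have hz := z3_ne (right_ne_zero_of_mul (right_ne_zero_of_mul (left_ne_zero_of_mul h)))
      simp only at hz
      refine ⟨(u, b, c / 3), ?_⟩
      simp only [Prod.mk.injEq, true_and]; omega
  rw [e1, e2, gs_smul]
  have : (C (-1 : FF) : FF⟦X⟧) = -1 := by simp
  rw [this, neg_one_mul, neg_neg]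
  ext n
  rw [coeff_gs, coeff_gs]
  exact lattice3 n

/-- class operators -/
def cls (r : FF) (f : FF⟦X⟧) : FF⟦X⟧ := mk fun n => if (n : FF) = r then coeff n f else 0

def Sup (r : FF) (f : FF⟦X⟧) : Prop := ∀ n : ℕ, (n : FF) ≠ r → coeff n f = 0

theorem coeff_cls (r : FF) (f : FF⟦X⟧) (n : ℕ) :
    coeff n (cls r f) = if (n : FF) = r then coeff n f else 0 := by simp [cls]

theorem cls_add (r : FF) (f g : FF⟦X⟧) : cls r (f + g) = cls r f + cls r g := by
  ext n; simp only [coeff_cls, map_add]; split_ifs <;> simp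

theorem cls_C (r a : FF) (f : FF⟦X⟧) : cls r (C a * f) = C a * cls r f := by
  ext n; simp only [coeff_cls, coeff_C_mul]; split_ifs <;> simp

theorem cls_mul {s : FF} {f : FF⟦X⟧} (h : Sup s f) (r r' : FF) (hr : r = s + r') (g : FF⟦X⟧) :
    cls r (f * g) = f * cls r' g := by
  ext n
  rw [coeff_cls, coeff_mul, coeff_mul]
  by_cases hn : (n : FF) = r
  · rw [if_pos hn]
    refine Finset.sum_congr rfl fun p hp => ?_
    have hp := Finset.HasAntidiagonal.mem_antidiagonal.mp hp
    by_cases h1 : (p.1 : FF) = s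
    · rw [coeff_cls, if_pos]
      have : (n : FF) = p.1 + p.2 := by rw [← hp]; push_cast; rfl
      rw [hn, hr, h1] at this
      exact (add_left_cancel this).symm
    · rw [h _ h1]; simp
  · rw [if_neg hn]
    symm
    refine Finset.sum_eq_zero fun p hp => ?_
    have hp := Finset.HasAntidiagonal.mem_antidiagonal.mp hp
    by_cases h1 : (p.1 : FF) = s
    · rw [coeff_cls, if_neg, mul_zero]
      intro h2
      apply hn
      rw [← hp]; push_cast
      rw [h1, h2, hr]
    · rw [h _ h1]; simp

theorem cls_self {r : FF} {f : FF⟦X⟧} (h : Sup r f) : cls r f = f := by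
  ext n; rw [coeff_cls]
  split_ifs with hn
  · rfl
  · exact (h n hn).symm

theorem cls_ne {r s : FF} {f : FF⟦X⟧} (h : Sup r f) (hrs : s ≠ r) : cls s f = 0 := by
  ext n; rw [coeff_cls]
  split_ifs with hn
  · rw [h n (by rw [hn]; exact hrs)]; simp
  · simp

theorem Sup_gs {ι : Type*} {E : ι → ℤ} {w : ι → FF} (r : FF) (h : ∀ i, w i ≠ 0 → (E i : FF) = r) :
    Sup r (gs E w) := by
  intro n hn
  rw [coeff_gs]
  refine finsum_eq_zero_of_forall_eq_zero fun i => ?_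
  split_ifs with hE
  · by_contra hw
    apply hn
    rw [← h i hw, hE]; simp
  · rfl

theorem ind_ne {r : FF} {u : ℤ} (h : ind r u ≠ 0) : (u : FF) ^ 2 = r := by
  by_contra h'
  simp [ind, h'] at h

theorem Sup_th (r : FF) : Sup r (th r) := by
  refine Sup_gs r fun u h => ?_
  have := ind_ne (right_ne_zero_of_mul h)
  push_cast; exact this

theorem Sup_K (r s t : FF) (ht : t = r - s) : Sup t (K r s) := by
  refine Sup_gs t fun u h => ?_
  have h := right_ne_zero_of_mul h
  have h1 := ind_ne (left_ne_zero_of_mul h)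
  have h2 := ind_ne (right_ne_zero_of_mul h)
  simp only [EK]; push_cast; rw [h1, h2, ht]

theorem cls_TH (r s1 s4 : FF) (h1 : r = 1 + s1) (h4 : r = 4 + s4) (F : FF⟦X⟧) :
    cls r (TH * F) = th 1 * cls s1 F + th 0 * cls r F + th 4 * cls s4 F := by
  rw [TH_eq, add_mul, add_mul, cls_add, cls_add, cls_mul (Sup_th 0) r r (by ring),
    cls_mul (Sup_th 1) r s1 h1, cls_mul (Sup_th 4) r s4 h4]
  ring

theorem Sup_X9 : Sup 4 ((X : FF⟦X⟧) ^ 9) := by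
  intro n hn
  rw [coeff_X_pow, if_neg]
  rintro rfl
  exact hn rfl

theorem clsK3 : cls 3 KK = K 4 1 := by
  rw [KK_eq]
  simp only [cls_add]
  rw [cls_ne (Sup_K 0 0 0 rfl) (by decide), cls_ne (Sup_K 0 1 4 rfl) (by decide),
    cls_ne (Sup_K 0 4 1 rfl) (by decide), cls_ne (Sup_K 1 0 1 rfl) (by decide),
    cls_ne (Sup_K 1 1 0 rfl) (by decide), cls_ne (Sup_K 1 4 2 rfl) (by decide),
    cls_ne (Sup_K 4 0 4 rfl) (by decide), cls_self (Sup_K 4 1 3 rfl),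
    cls_ne (Sup_K 4 4 0 rfl) (by decide)]
  ring
theorem clsK2 : cls 2 KK = K 1 4 := by
  rw [KK_eq]
  simp only [cls_add]
  rw [cls_ne (Sup_K 0 0 0 rfl) (by decide), cls_ne (Sup_K 0 1 4 rfl) (by decide),
    cls_ne (Sup_K 0 4 1 rfl) (by decide), cls_ne (Sup_K 1 0 1 rfl) (by decide),
    cls_ne (Sup_K 1 1 0 rfl) (by decide), cls_self (Sup_K 1 4 2 rfl),
    cls_ne (Sup_K 4 0 4 rfl) (by decide), cls_ne (Sup_K 4 1 3 rfl) (by decide),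
    cls_ne (Sup_K 4 4 0 rfl) (by decide)]
  ring
theorem clsK4 : cls 4 KK = K 4 0 + K 0 1 := by
  rw [KK_eq]
  simp only [cls_add]
  rw [cls_ne (Sup_K 0 0 0 rfl) (by decide), cls_self (Sup_K 0 1 4 rfl),
    cls_ne (Sup_K 0 4 1 rfl) (by decide), cls_ne (Sup_K 1 0 1 rfl) (by decide),
    cls_ne (Sup_K 1 1 0 rfl) (by decide), cls_ne (Sup_K 1 4 2 rfl) (by decide),
    cls_self (Sup_K 4 0 4 rfl), cls_ne (Sup_K 4 1 3 rfl) (by decide),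
    cls_ne (Sup_K 4 4 0 rfl) (by decide)]
  ring
theorem clsK1 : cls 1 KK = K 1 0 + K 0 4 := by
  rw [KK_eq]
  simp only [cls_add]
  rw [cls_ne (Sup_K 0 0 0 rfl) (by decide), cls_ne (Sup_K 0 1 4 rfl) (by decide),
    cls_self (Sup_K 0 4 1 rfl), cls_self (Sup_K 1 0 1 rfl),
    cls_ne (Sup_K 1 1 0 rfl) (by decide), cls_ne (Sup_K 1 4 2 rfl) (by decide),
    cls_ne (Sup_K 4 0 4 rfl) (by decide), cls_ne (Sup_K 4 1 3 rfl) (by decide),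
    cls_ne (Sup_K 4 4 0 rfl) (by decide)]
  ring

theorem clsH0 : cls 0 H4 = 0 := by
  ext n
  rw [coeff_cls, map_zero]
  split_ifs with hn
  swap
  · rfl
  unfold H4
  rw [coeff_gs]
  refine finsum_eq_zero_of_forall_eq_zero fun p => ?_
  split_ifs with hE
  swap
  · rfl
  have h : (EH p : FF) = 0 := by rw [hE, ← hn]; simp
  simp only [EH] at h
  push_cast at h
  have : ∀ b d : FF, 3 * b ^ 2 - 9 * d ^ 2 = 0 → b - 2 * d = 0 := by decide
  have := this _ _ h
  simp only [wH]; push_cast; rw [this]; ring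

theorem five_eq : (5 : FF⟦X⟧) = 0 := by
  have : (C (5 : FF) : FF⟦X⟧) = 5 := map_ofNat C 5
  rw [← this]
  have : (5 : FF) = 0 := rfl
  rw [this, map_zero]

theorem coeff25_th1 : coeff 25 (th 1) = 0 := Sup_th 1 25 (by decide)

theorem coeff25_th0 : coeff 25 (th 0) ≠ 0 := by
  classical
  unfold th
  rw [coeff_gs, finsum_eq_sum_of_support_subset (s := {5, -5})]
  · rw [Finset.sum_pair (by norm_num)]
    decide
  · intro u hu
    rw [Function.mem_support] at hu
    have : u ^ 2 = (25 : ℕ) := by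
      by_contra h; rw [if_neg h] at hu; exact hu rfl
    have h : (u - 5) * (u + 5) = 0 := by push_cast at this; linarith
    simp only [Finset.coe_insert, Finset.coe_singleton, Set.mem_insert_iff, Set.mem_singleton_iff]
    rcases mul_eq_zero.mp h with h | h
    · left; linarith
    · right; linarith

theorem nonvan : th 1 ^ 2 * th 0 + 2 * th 4 ^ 3 ≠ 0 := by
  intro h
  have h1 : th 0 * (th 1 - 2 * th 0) ^ 5 = 0 := by
    have := R1
    linear_combination th 1 ^ 3 * h - 2 * ((th 1 * th 4) ^ 2 - (th 1 * th 4) * (th 0 * th 0)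
      + (th 0 * th 0) ^ 2) * this + (th 0) * (-2 * th 1 ^ 4 * th 0 + 8 * th 1 ^ 3 * th 0 ^ 2
        - 16 * th 1 ^ 2 * th 0 ^ 3 + 16 * th 1 * th 0 ^ 4 - 6 * th 0 ^ 5) * five_eq
  rcases mul_eq_zero.mp h1 with h2 | h2
  · apply coeff25_th0
    rw [h2, map_zero]
  · have h3 := pow_eq_zero_iff (by norm_num) |>.mp h2
    have e2 : (C (2 : FF) : FF⟦X⟧) = 2 := map_ofNat C 2
    have h4 := congrArg (coeff 25) h3
    rw [← e2, map_sub, coeff_C_mul, coeff25_th1, map_zero] at h4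
    apply coeff25_th0
    apply FF_two_mul
    linear_combination -h4

theorem elim (θ G : FF⟦X⟧) (hθ : θ ≠ 0) (hT : TH = C 2 * θ) (hJ : J2 = C 2 * θ ^ 3)
    (hG : θ ^ 3 * G = X ^ 9 * H4) (n : ℕ) (hn : (n : FF) = 2) : coeff n G = 0 := by
  have c2 : (C (2 : FF) : FF⟦X⟧) ≠ 0 := by
    have : (2 : FF) ≠ 0 := by decide
    intro h
    apply this
    have := congrArg (coeff 0) h
    simpa using this
  have h1 : H4 = - (θ ^ 2 * KK) := by
    have := R3
    rw [hT, hJ] at this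
    have h' : (C (2 : FF) * θ) * H4 = (C (2 : FF) * θ) * (- (θ ^ 2 * KK)) := by
      rw [this]; ring
    exact mul_left_cancel₀ (mul_ne_zero c2 hθ) h'
  have h2 : θ * G = - (X ^ 9 * KK) := by
    rw [h1] at hG
    have h' : θ ^ 2 * (θ * G) = θ ^ 2 * (- (X ^ 9 * KK)) := by
      linear_combination hG
    exact mul_left_cancel₀ (pow_ne_zero 2 hθ) h'
  have h3 : TH * G = X ^ 9 * (C (-2) * KK) := by
    rw [hT, map_neg]
    linear_combination (C (2 : FF)) * h2
  have h4 : TH * (TH * (TH * G)) = X ^ 9 * (C 8 * H4) := by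
    have e8 : (C (8 : FF) : FF⟦X⟧) = C 2 * C 2 * C 2 := by
      rw [← map_mul, ← map_mul]; congr 1
    rw [hT, e8]
    linear_combination (C (2 : FF)) ^ 3 * hG
  have T0 := cls_TH 0 4 1 (by decide) (by decide)
  have T1 := cls_TH 1 0 2 (by decide) (by decide)
  have T2 := cls_TH 2 1 3 (by decide) (by decide)
  have T3 := cls_TH 3 2 4 (by decide) (by decide)
  have T4 := cls_TH 4 3 0 (by decide) (by decide)
  have q4 : cls 4 (TH * (TH * (TH * G))) = 0 := by
    rw [h4, cls_mul Sup_X9 4 0 (by decide), cls_C, clsH0]; ring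
  simp only [T0, T1, T2, T3, T4] at q4
  have k2 : cls 2 (TH * G) = X ^ 9 * (C (-2) * K 4 1) := by
    rw [h3, cls_mul Sup_X9 2 3 (by decide), cls_C, clsK3]
  have k3 : cls 3 (TH * G) = X ^ 9 * (C (-2) * (K 4 0 + K 0 1)) := by
    rw [h3, cls_mul Sup_X9 3 4 (by decide), cls_C, clsK4]
  have k0 : cls 0 (TH * G) = X ^ 9 * (C (-2) * (K 1 0 + K 0 4)) := by
    rw [h3, cls_mul Sup_X9 0 1 (by decide), cls_C, clsK1]
  have k1 : cls 1 (TH * G) = X ^ 9 * (C (-2) * K 1 4) := by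
    rw [h3, cls_mul Sup_X9 1 2 (by decide), cls_C, clsK2]
  rw [T2] at k2
  rw [T3] at k3
  rw [T0] at k0
  rw [T1] at k1
  have r2 := R2
  have r1 := R1
  generalize cls 0 G = G0 at *
  generalize cls 1 G = G1 at *
  generalize hG2 : cls 2 G = G2 at *
  generalize cls 3 G = G3 at *
  generalize cls 4 G = G4 at *
  have nv := nonvan
  generalize th 0 = B at *
  generalize th 1 = a at *
  generalize th 4 = D at *
  have I1 : (a ^ 3 - 2 * B * D ^ 2) * G1 + (2 * a ^ 2 * B - D ^ 3) * G2 = 0 := by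
    linear_combination a ^ 2 * k2 + a * B * k3 - B * D * k0 - D ^ 2 * k1
      + (X ^ 9 * C (-2)) * r2 - (a * G3 - D * G0) * r1
  have I2 : (a ^ 3 + 3 * B * D ^ 2) * G1 + (3 * a ^ 2 * B + D ^ 3) * G2 = 0 := by
    linear_combination q4 - (3 * a * G3 + 6 * B * G4 + 3 * D * G0) * r1 + B ^ 3 * G4 * five_eq
  have I3 : (a ^ 2 * B + 2 * D ^ 3) * G2 = 0 := by
    linear_combination I2 - I1 - B * D ^ 2 * G1 * five_eq
  have : G2 = 0 := (mul_eq_zero.mp I3).resolve_left nv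
  have h := congrArg (coeff n) hG2
  rw [this, coeff_cls, if_pos hn, map_zero] at h
  exact h

/-! part Q1 -/

def qp (n : ℕ) : FF⟦X⟧ := ∏ i ∈ Finset.range n, (1 - X ^ (i + 1))
def iq (n : ℕ) : FF⟦X⟧ := (qp n)⁻¹
def PP : FF⟦X⟧ := pentagonalSeries FF
def TT (i : ℕ) : ℕ := i * (i + 1) / 2

theorem TT_succ (i : ℕ) : TT (i + 1) = TT i + (i + 1) := by
  unfold TT
  have : (i + 1) * (i + 1 + 1) = i * (i + 1) + 2 * (i + 1) := by ring
  rw [this]; omega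

theorem two_TT (i : ℕ) : 2 * TT i = i * (i + 1) := by
  induction i with
  | zero => rfl
  | succ k ih => rw [TT_succ, mul_add, ih]; ring

theorem le_TT (i : ℕ) : i ≤ TT i := by
  cases i with
  | zero => simp
  | succ k => rw [TT_succ]; omega

theorem qp_zero : qp 0 = 1 := by simp [qp]

theorem qp_succ (n : ℕ) : qp (n + 1) = qp n * (1 - X ^ (n + 1)) := by
  simp [qp, Finset.prod_range_succ]

theorem qp_const (n : ℕ) : constantCoeff (qp n) = 1 := by
  induction n with
  | zero => simp [qp_zero]
  | succ k ih => rw [qp_succ, map_mul, ih]; simp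

theorem qp_iq (n : ℕ) : qp n * iq n = 1 :=
  PowerSeries.mul_inv_cancel _ (by rw [qp_const]; decide)

theorem iq_succ (n : ℕ) : iq n = (1 - X ^ (n + 1)) * iq (n + 1) := by
  have h1 := qp_iq n
  have h2 := qp_iq (n + 1)
  rw [qp_succ] at h2
  linear_combination ((1 - X ^ (n + 1)) * iq (n + 1)) * h1 - iq n * h2

theorem qp_cong (m k : ℕ) : (X : FF⟦X⟧) ^ (m + 1) ∣ qp (m + k) - qp m := by
  induction k with
  | zero => simp
  | succ k ih =>
    have : qp (m + (k + 1)) - qp m = (qp (m + k) - qp m) - X ^ (m + 1) * (X ^ k * qp (m + k)) := by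
      rw [← add_assoc, qp_succ]; ring
    rw [this]
    exact dvd_sub ih (dvd_mul_right _ _)

theorem PP_cong (m : ℕ) : (X : FF⟦X⟧) ^ (m + 1) ∣ PP - qp m := by
  rw [X_pow_dvd_iff]
  intro k hk
  have h := coeff_prod_one_sub_X_pow_eventually_eq FF k
  rw [Filter.eventually_atTop] at h
  obtain ⟨s0, h⟩ := h
  obtain ⟨r, hr⟩ := s0.exists_nat_subset_range
  have h1 := h (Finset.range (m + r)) (hr.trans (Finset.range_mono (by omega)))
  have h2 := X_pow_dvd_iff.mp (qp_cong m r) k hk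
  rw [map_sub] at h2 ⊢
  unfold PP
  rw [← h1]
  exact h2

theorem PP_const : constantCoeff PP = 1 := by
  have := X_pow_dvd_iff.mp (PP_cong 0) 0 (by norm_num)
  rw [qp_zero] at this
  simp only [map_sub, coeff_zero_eq_constantCoeff, map_one] at this
  linear_combination this

theorem PP_inv : PP * PP⁻¹ = 1 :=
  PowerSeries.mul_inv_cancel _ (by rw [PP_const]; decide)

/-- the finite Jacobi summand -/
def ee (N i : ℕ) : FF⟦X⟧ :=
  if i ≤ N then (-1) ^ i * X ^ (TT i) * qp (2 * N + 1) * iq (N - i) * iq (N + i + 1) else 0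

def eem (N i : ℕ) : FF⟦X⟧ := match i with
  | 0 => - ee N 0
  | k + 1 => ee N k

theorem ee_rec (N i a : ℕ) (h : i + a = N + 1) :
    ee (N + 1) i = (1 + X ^ (2 * N + 2)) * ee N i - X ^ (N + 1) * (eem N i + ee N (i + 1)) := by
  have q1 : qp (2 * (N + 1) + 1) = qp (2 * N + 1) * (1 - X ^ (2 * N + 2)) * (1 - X ^ (2 * N + 3)) := by
    rw [show 2 * (N + 1) + 1 = 2 * N + 1 + 1 + 1 by ring, qp_succ, qp_succ]
  have q2 : iq (N + i) = (1 - X ^ (N + i + 1)) * ((1 - X ^ (N + i + 2)) * iq (N + i + 2)) := by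
    rw [iq_succ, iq_succ (N + i + 1)]
  have q3 : iq (N + i + 1) = (1 - X ^ (N + i + 2)) * iq (N + i + 2) := iq_succ (N + i + 1)
  have e1 : ee (N + 1) i = (-1) ^ i * X ^ (TT i) * qp (2 * N + 1) * iq a * iq (N + i + 2) *
      ((1 - X ^ (2 * N + 2)) * (1 - X ^ (2 * N + 3))) := by
    unfold ee
    rw [if_pos (by omega), q1, show N + 1 - i = a by omega, show N + 1 + i + 1 = N + i + 2 by ring]
    ring
  have e2 : ee N i = (-1) ^ i * X ^ (TT i) * qp (2 * N + 1) * iq a * iq (N + i + 2) *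
      ((1 - X ^ a) * (1 - X ^ (N + i + 2))) := by
    unfold ee
    rcases a with _ | a
    · rw [if_neg (by omega)]; simp
    · rw [if_pos (by omega), show N - i = a by omega, q3, iq_succ a]; ring
  have e3 : X ^ (N + 1) * eem N i = - (-1) ^ i * X ^ (TT i) * qp (2 * N + 1) * iq a * iq (N + i + 2) *
      (X ^ a * ((1 - X ^ (N + i + 1)) * (1 - X ^ (N + i + 2)))) := by
    rcases i with _ | i
    · simp only [eem, ee]
      rw [if_pos (by omega)]
      have : iq (N - 0) = iq (N + 0) := rfl
      rw [this, q2]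
      obtain rfl : a = N + 1 := by omega
      simp only [add_zero, zero_add]
      ring
    · simp only [eem, ee]
      rw [if_pos (by omega), show N - i = a by omega, add_assoc N i 1, q2, TT_succ]
      rw [show N + 1 = (i + 1) + a by omega]
      ring
  have e4 : X ^ (N + 1) * ee N (i + 1) =
      - (-1) ^ i * X ^ (TT i) * qp (2 * N + 1) * iq a * iq (N + i + 2) *
      ((X ^ (N + i + 2) - X ^ (2 * N + 2)) * (1 - X ^ a)) := by
    unfold ee
    rcases a with _ | _ | a
    · rw [if_neg (by omega)]; simp
    · rw [if_neg (by omega), show 2 * N + 2 = N + i + 2 by omega]; simp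
    · rw [if_pos (by omega), show N - (i + 1) = a by omega, TT_succ, iq_succ a, iq_succ (a + 1),
        show N + (i + 1) + 1 = N + i + 2 by ring, show 2 * N + 2 = N + i + 2 + (a + 1) by omega]
      ring
  rw [mul_add, e1, e2, e3, e4]
  have e5 : (X : FF⟦X⟧) ^ (2 * N + 2) = X ^ a * X ^ (N + i + 1) := by
    rw [← pow_add]; congr 1; omega
  have e6 : (X : FF⟦X⟧) ^ (2 * N + 3) = X ^ a * X ^ (N + i + 1) * X := by
    rw [← pow_add, ← pow_succ]; congr 1; omega
  have e7 : (X : FF⟦X⟧) ^ (N + i + 2) = X ^ (N + i + 1) * X := by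
    rw [← pow_succ]
  rw [e5, e6, e7]
  ring

theorem ee_big {N i : ℕ} (h : N < i) : ee N i = 0 := if_neg (by omega)

theorem sum_rec {R : Type*} [CommRing R] (N : ℕ) (f g m : ℕ → R) (u v : R) (hm0 : m 0 = - f 0)
    (hm : ∀ k, m (k + 1) = f k) (hf : ∀ i, N < i → f i = 0)
    (hg : ∀ i, i ≤ N + 1 → g i = u * f i - v * (m i + f (i + 1))) :
    ∑ i ∈ Finset.range (N + 2), (2 * (i : R) + 1) * g i =
      (u - 2 * v) * ∑ i ∈ Finset.range (N + 1), (2 * (i : R) + 1) * f i := by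
  have s1 : ∑ i ∈ Finset.range (N + 2), (2 * (i : R) + 1) * g i =
      ∑ i ∈ Finset.range (N + 2), (u * ((2 * (i : R) + 1) * f i)
        - v * ((2 * (i : R) + 1) * m i + (2 * (i : R) + 1) * f (i + 1))) := by
    refine Finset.sum_congr rfl fun i hi => ?_
    rw [Finset.mem_range] at hi
    rw [hg i (by omega)]
    ring
  have s2 : ∑ i ∈ Finset.range (N + 2), (2 * (i : R) + 1) * m i =
      ∑ i ∈ Finset.range (N + 1), (2 * (i : R) + 3) * f i - f 0 := by
    have h2 : ∀ i : ℕ, (2 * ((i + 1 : ℕ) : R) + 1) * m (i + 1)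
        = (2 * (i : R) + 3) * f i := by
      intro i; rw [hm]; push_cast; ring
    rw [Finset.sum_range_succ', hm0]
    simp only [h2]
    push_cast
    ring
  have s3 : ∑ i ∈ Finset.range (N + 2), (2 * (i : R) + 1) * f (i + 1) =
      ∑ i ∈ Finset.range (N + 1), (2 * (i : R) - 1) * f i + f 0 := by
    have := Finset.sum_range_succ' (fun i : ℕ => (2 * (i : R) - 1) * f i) (N + 1 + 1)
    rw [Finset.sum_range_succ, Finset.sum_range_succ _ (N + 1), hf _ (show N < N + 1 + 1 by omega),
      hf _ (show N < N + 1 by omega)] at this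
    have h2 : ∀ i : ℕ, (2 * ((i + 1 : ℕ) : R) - 1) * f (i + 1)
        = (2 * (i : R) + 1) * f (i + 1) := by
      intro i; push_cast; ring
    simp only [h2] at this
    push_cast at this
    linear_combination - this
  have s4 : ∑ i ∈ Finset.range (N + 1), (2 * (i : R) + 3) * f i
      + ∑ i ∈ Finset.range (N + 1), (2 * (i : R) - 1) * f i
      = 2 * ∑ i ∈ Finset.range (N + 1), (2 * (i : R) + 1) * f i := by
    rw [← Finset.sum_add_distrib, Finset.mul_sum]
    refine Finset.sum_congr rfl fun i _ => ?_
    ring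
  have s5 : ∑ i ∈ Finset.range (N + 2), (2 * (i : R) + 1) * f i =
      ∑ i ∈ Finset.range (N + 1), (2 * (i : R) + 1) * f i := by
    rw [Finset.sum_range_succ, hf _ (show N < N + 1 by omega)]; ring
  rw [s1, Finset.sum_sub_distrib, ← Finset.mul_sum, ← Finset.mul_sum, Finset.sum_add_distrib,
    s2, s3, s5]
  linear_combination - v * s4

theorem fin_jacobi (N : ℕ) :
    ∑ i ∈ Finset.range (N + 1), (2 * (i : FF⟦X⟧) + 1) * ee N i = qp N ^ 2 := by
  induction N with
  | zero =>
    have h := qp_iq 1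
    have h0 := qp_iq 0
    rw [qp_zero] at h0 ⊢
    simp [ee, TT]
    linear_combination h0 * (qp 1 * iq 1) + h
  | succ N ih =>
    rw [sum_rec N (ee N) (ee (N + 1)) (eem N) (1 + X ^ (2 * N + 2)) (X ^ (N + 1)) rfl
      (fun _ => rfl) (fun i hi => ee_big hi)
      (fun i hi => ee_rec N i (N + 1 - i) (by omega)), ih, qp_succ]
    ring

/-! part Q2 -/

def ph (M : ℕ) : FF⟦X⟧ →+* FF⟦X⟧ ⧸ Ideal.span {(X : FF⟦X⟧) ^ M} := Ideal.Quotient.mk _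

theorem ph_eq {M : ℕ} {f g : FF⟦X⟧} : ph M f = ph M g ↔ (X : FF⟦X⟧) ^ M ∣ f - g := by
  unfold ph
  rw [Ideal.Quotient.eq, Ideal.mem_span_singleton]

theorem ph_coeff {M : ℕ} {f g : FF⟦X⟧} : ph M f = ph M g ↔ ∀ k < M, coeff k f = coeff k g := by
  rw [ph_eq, X_pow_dvd_iff]
  simp only [map_sub, sub_eq_zero]

theorem ph_X {M k : ℕ} (h : M ≤ k) : ph M (X ^ k) = 0 := by
  rw [← map_zero (ph M), ph_eq, sub_zero]
  exact pow_dvd_pow _ h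

theorem ph_X_mul {M k j : ℕ} (h : M ≤ j + k) {f g : FF⟦X⟧} (hfg : ph k f = ph k g) :
    ph M (X ^ j * f) = ph M (X ^ j * g) := by
  rw [ph_eq] at *
  rw [← mul_sub]
  refine (pow_dvd_pow _ h).trans ?_
  rw [pow_add]
  exact mul_dvd_mul_left _ hfg

theorem ph_qp {M m : ℕ} (h : M ≤ m + 1) : ph M (qp m) = ph M PP := by
  symm
  rw [ph_eq]
  exact (pow_dvd_pow _ h).trans (PP_cong m)

theorem ph_iq {M m : ℕ} (h : M ≤ m + 1) : ph M (iq m) = ph M PP⁻¹ := by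
  have h1 := congrArg (ph M) (qp_iq m)
  have h2 := congrArg (ph M) PP_inv
  rw [map_mul, map_one] at h1 h2
  rw [ph_qp h] at h1
  linear_combination ph M PP⁻¹ * h1 - ph M (iq m) * h2

theorem jac_term (N i : ℕ) (hi : i ≤ N) :
    ph (N + 1) (PP * ee N i) = ph (N + 1) ((-1) ^ i * X ^ (TT i)) := by
  have h1 : PP * ee N i = (-1) ^ i *
      (X ^ (TT i) * (PP * qp (2 * N + 1) * iq (N - i) * iq (N + i + 1))) := by
    unfold ee; rw [if_pos hi]; ring
  have hT := le_TT i
  have h2 : ph (N + 1 - i) (PP * qp (2 * N + 1) * iq (N - i) * iq (N + i + 1))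
      = ph (N + 1 - i) 1 := by
    simp only [map_mul]
    rw [ph_qp (by omega), ph_iq (by omega), ph_iq (by omega)]
    simp only [← map_mul]
    congr 1
    linear_combination (PP * PP⁻¹ + 1) * PP_inv
  rw [h1, map_mul, ph_X_mul (by omega) h2, ← map_mul, mul_one]

theorem jac (N : ℕ) : ph (N + 1) (PP ^ 3) =
    ph (N + 1) (∑ i ∈ Finset.range (N + 1), (2 * (i : FF⟦X⟧) + 1) * ((-1) ^ i * X ^ (TT i))) := by
  have h1 : ph (N + 1) (PP ^ 3) = ph (N + 1) (PP * qp N ^ 2) := by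
    simp only [map_mul, map_pow]
    rw [ph_qp (by omega)]; ring
  rw [h1, ← fin_jacobi, Finset.mul_sum, map_sum, map_sum]
  refine Finset.sum_congr rfl fun i hi => ?_
  rw [Finset.mem_range] at hi
  rw [mul_left_comm, map_mul, jac_term N i (by omega), ← map_mul]

def Bm (c m : ℕ) : FF⟦X⟧ := ∑ k ∈ Finset.range m, X ^ k * iq k * iq (k + c)

theorem Bm_tele (c m : ℕ) : (Bm c m + X ^ (c + 1) * Bm (c + 1) m)
    - (Bm (c + 1) m + X ^ (c + 2) * Bm (c + 2) m)
    = X ^ m * (- X ^ (c + 1) * (1 - X ^ m) * iq m * iq (m + c + 1)) := by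
  induction m with
  | zero => simp [Bm]
  | succ m ih =>
    have b : ∀ d, Bm d (m + 1) = Bm d m + X ^ m * iq m * iq (m + d) := by
      intro d; simp [Bm, Finset.sum_range_succ]
    rw [b, b, b]
    have e1 : iq (m + c) = (1 - X ^ (m + c + 1)) * iq (m + c + 1) := iq_succ _
    have e2 : iq (m + (c + 1)) = (1 - X ^ (m + c + 2)) * iq (m + c + 2) := iq_succ _
    have e3 : iq (m + c + 1) = (1 - X ^ (m + c + 2)) * iq (m + c + 2) := iq_succ _
    have e4 : iq m = (1 - X ^ (m + 1)) * iq (m + 1) := iq_succ _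
    have e5 : iq (m + 1 + c + 1) = iq (m + c + 2) := by congr 1; ring
    have e6 : iq (m + (c + 2)) = iq (m + c + 2) := rfl
    rw [e3] at ih e1
    rw [e5, e6, e1, e2]
    rw [e4] at ih ⊢
    linear_combination ih

theorem euler_fin (m : ℕ) : ∑ k ∈ Finset.range (m + 1), X ^ k * iq k = iq m := by
  induction m with
  | zero => simp
  | succ m ih =>
    rw [Finset.sum_range_succ, ih, iq_succ m]; ring

theorem D_step (c m : ℕ) : ph m (Bm c m + X ^ (c + 1) * Bm (c + 1) m)
    = ph m (Bm (c + 1) m + X ^ (c + 2) * Bm (c + 2) m) := by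
  rw [ph_eq, Bm_tele]
  exact dvd_mul_right _ _

theorem D_iter (c m j : ℕ) : ph m (Bm c m + X ^ (c + 1) * Bm (c + 1) m)
    = ph m (Bm (c + j) m + X ^ (c + j + 1) * Bm (c + j + 1) m) := by
  induction j with
  | zero => rfl
  | succ j ih => rw [ih]; exact D_step (c + j) m

theorem D_val (c m : ℕ) : ph m (PP ^ 2 * (Bm c m + X ^ (c + 1) * Bm (c + 1) m)) = 1 := by
  rw [map_mul, D_iter c m m, map_add, map_mul, ph_X (by omega), zero_mul, add_zero]
  rcases m with _ | m
  · rw [← map_mul, ← map_one (ph 0), ph_eq]; simp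
  have h : ph (m + 1) (Bm (c + (m + 1)) (m + 1)) = ph (m + 1) (PP⁻¹ ^ 2) := by
    unfold Bm
    rw [map_sum]
    have : ∀ k ∈ Finset.range (m + 1), ph (m + 1) (X ^ k * iq k * iq (k + (c + (m + 1))))
        = ph (m + 1) (X ^ k * iq k) * ph (m + 1) PP⁻¹ := by
      intro k _
      rw [map_mul _ (X ^ k * iq k), ph_iq (by omega)]
    rw [Finset.sum_congr rfl this, ← Finset.sum_mul, ← map_sum, euler_fin, ph_iq (by omega),
      map_pow, sq]
  rw [h, ← map_mul, ← map_one (ph (m + 1))]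
  congr 1
  linear_combination (PP * PP⁻¹ + 1) * PP_inv

theorem B_iter (c m J : ℕ) : ph m (PP ^ 2 * Bm c m) =
    ph m (∑ j ∈ Finset.range J, (-1) ^ j * X ^ (TT j + c * j)
      + (-1) ^ J * X ^ (TT J + c * J) * (PP ^ 2 * Bm (c + J) m)) := by
  induction J with
  | zero => simp [TT]
  | succ J ih =>
    have h := D_val (c + J) m
    rw [← map_one (ph m)] at h
    rw [ih, Finset.sum_range_succ, TT_succ]
    have h' := congrArg (fun z => ph m ((-1) ^ J * X ^ (TT J + c * J)) * z) h
    simp only [← map_mul] at h'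
    rw [← sub_eq_zero, ← map_sub] at h' ⊢
    rw [← h']
    congr 1
    rw [show TT J + (J + 1) + c * (J + 1) = TT J + c * J + (c + J + 1) by ring,
      ← add_assoc c J 1]
    ring

theorem B_val (c m J : ℕ) (h : m ≤ J) : ph m (PP ^ 2 * Bm c m) =
    ph m (∑ j ∈ Finset.range J, (-1) ^ j * X ^ (TT j + c * j)) := by
  rw [B_iter c m J, map_add, map_mul, map_mul _ ((-1) ^ J), ph_X, mul_zero, zero_mul, add_zero]
  have := le_TT J
  omega

def Fsum (M : ℕ) : FF⟦X⟧ := ∑ N ∈ Finset.range M, X ^ (N + 1) * qp N ^ 2 * iq (2 * N + 1)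

def Fterm (i k : ℕ) : FF⟦X⟧ := X ^ (TT i + (i + 1)) * ((2 * (i : FF⟦X⟧) + 1) * (-1) ^ i *
        (X ^ k * iq k * iq (k + (2 * i + 1))))

theorem Fsum_eq (M : ℕ) : Fsum M = ∑ i ∈ Finset.range M,
    X ^ (TT i + (i + 1)) * ((2 * (i : FF⟦X⟧) + 1) * (-1) ^ i * Bm (2 * i + 1) (M - i)) := by
  have h1 : Fsum M = ∑ N ∈ Finset.range M, ∑ i ∈ Finset.range (N + 1),
      Fterm i (N - i) := by
    unfold Fsum
    refine Finset.sum_congr rfl fun N _ => ?_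
    rw [← fin_jacobi, Finset.mul_sum, Finset.sum_mul]
    refine Finset.sum_congr rfl fun i hi => ?_
    rw [Finset.mem_range] at hi
    unfold ee
    rw [if_pos (by omega)]
    obtain ⟨k, rfl⟩ : ∃ k, N = i + k := ⟨N - i, by omega⟩
    have e1 : i + k - i = k := by omega
    simp only [e1, Fterm]
    rw [show k + (2 * i + 1) = i + k + i + 1 by ring]
    linear_combination (X ^ (TT i + (i + 1)) * ((2 * (i : FF⟦X⟧) + 1) * (-1) ^ i *
        (X ^ k * iq k * iq (i + k + i + 1)))) * qp_iq (2 * (i + k) + 1)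
  rw [h1, Finset.sum_range_diag_flip M Fterm]
  refine Finset.sum_congr rfl fun i _ => ?_
  simp only [Fterm, Bm, Finset.mul_sum]

theorem Fsum_val (M : ℕ) : ph M (PP ^ 2 * Fsum M) =
    ph M (∑ i ∈ Finset.range M, ∑ j ∈ Finset.range M,
      (2 * (i : FF⟦X⟧) + 1) * ((-1) ^ i * (-1) ^ j * X ^ (TT i + (i + 1) + (TT j + (2 * i + 1) * j)))) := by
  rw [Fsum_eq, Finset.mul_sum, map_sum, map_sum]
  refine Finset.sum_congr rfl fun i hi => ?_
  have h := B_val (2 * i + 1) (M - i) M (by omega)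
  have h2 := ph_X_mul (M := M) (j := TT i + (i + 1)) (by omega) h
  have e1 : PP ^ 2 * (X ^ (TT i + (i + 1)) * ((2 * (i : FF⟦X⟧) + 1) * (-1) ^ i *
      Bm (2 * i + 1) (M - i))) = ((2 * (i : FF⟦X⟧) + 1) * (-1) ^ i) *
        (X ^ (TT i + (i + 1)) * (PP ^ 2 * Bm (2 * i + 1) (M - i))) := by ring
  rw [e1, map_mul, h2, ← map_mul, Finset.mul_sum, Finset.mul_sum]
  congr 1
  refine Finset.sum_congr rfl fun j _ => ?_
  rw [pow_add _ (TT i + (i + 1))]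
  ring

/-! part Comb -/

def SA (A : Finset ℕ) (n : ℕ) : Set (Multiset ℕ) := {m | (∀ x ∈ m, x ∈ A) ∧ m.sum = n}
def DA (A : Finset ℕ) (a n : ℕ) : Set (Multiset ℕ) := {m | a ∈ m ∧ (∀ x ∈ m, x ∈ A) ∧ m.sum = n}

theorem SA_fin (A : Finset ℕ) (h : 0 ∉ A) (n : ℕ) : (SA A n).Finite := by
  refine (Set.finite_range (fun p : n.Partition => p.parts)).subset ?_
  rintro m ⟨h1, h2⟩
  refine ⟨⟨m, ?_, h2⟩, rfl⟩
  intro i hi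
  rcases Nat.eq_zero_or_pos i with h0 | h0
  · subst h0; exact absurd (h1 _ hi) h
  · exact h0

theorem DA_fin (A : Finset ℕ) (h : 0 ∉ A) (a n : ℕ) : (DA A a n).Finite :=
  (SA_fin A h n).subset fun _ hm => ⟨hm.2.1, hm.2.2⟩

def cs (A : Finset ℕ) : FF⟦X⟧ := mk fun n => ((SA A n).ncard : FF)

theorem DA_gf (A : Finset ℕ) (a : ℕ) (ha : a ∈ A) :
    (mk fun n => ((DA A a n).ncard : FF)) = X ^ a * cs A := by
  ext n
  rw [coeff_mk, coeff_X_pow_mul']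
  split_ifs with h
  · rw [cs, coeff_mk]
    congr 1
    have : DA A a n = (fun m => a ::ₘ m) '' SA A (n - a) := by
      ext m
      constructor
      · rintro ⟨h1, h2, h3⟩
        obtain ⟨t, rfl⟩ := Multiset.exists_cons_of_mem h1
        refine ⟨t, ⟨fun x hx => h2 x (Multiset.mem_cons_of_mem hx), ?_⟩, rfl⟩
        rw [Multiset.sum_cons] at h3
        omega
      · rintro ⟨t, ⟨h2, h3⟩, rfl⟩
        refine ⟨Multiset.mem_cons_self _ _, ?_, ?_⟩
        · intro x hx
          rcases Multiset.mem_cons.mp hx with rfl | hx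
          · exact ha
          · exact h2 x hx
        · rw [Multiset.sum_cons]; omega
    rw [this, Set.ncard_image_of_injective]
    intro s t hst
    exact (Multiset.cons_inj_right a).mp hst
  · have : DA A a n = ∅ := by
      ext m
      simp only [Set.mem_empty_iff_false, iff_false]
      rintro ⟨h1, h2, h3⟩
      have := Multiset.le_sum_of_mem h1
      omega
    rw [this]; simp

theorem cs_insert (B : Finset ℕ) (a : ℕ) (ha : a ∉ B) (h0 : 0 ∉ insert a B) :
    cs (insert a B) = cs B + X ^ a * cs (insert a B) := by
  rw [← DA_gf _ a (Finset.mem_insert_self a B)]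
  ext n
  rw [map_add, coeff_mk, cs, cs, coeff_mk, coeff_mk, ← Nat.cast_add]
  congr 1
  rw [← Set.ncard_union_eq _ (SA_fin B (fun h => h0 (Finset.mem_insert_of_mem h)) n)
    (DA_fin _ h0 a n)]
  · congr 1
    ext m
    constructor
    · rintro ⟨h1, h2⟩
      by_cases hm : a ∈ m
      · exact Or.inr ⟨hm, h1, h2⟩
      · refine Or.inl ⟨fun x hx => ?_, h2⟩
        rcases Finset.mem_insert.mp (h1 x hx) with rfl | h
        · exact absurd hx hm
        · exact h
    · rintro (⟨h1, h2⟩ | ⟨h1, h2, h3⟩)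
      · exact ⟨fun x hx => Finset.mem_insert_of_mem (h1 x hx), h2⟩
      · exact ⟨h2, h3⟩
  · rw [Set.disjoint_left]
    rintro m ⟨h1, h2⟩ ⟨h3, _⟩
    exact ha (h1 a h3)

theorem cs_prod (A : Finset ℕ) (h0 : 0 ∉ A) : cs A * ∏ a ∈ A, (1 - X ^ a) = 1 := by
  classical
  induction A using Finset.induction_on with
  | empty =>
    rw [Finset.prod_empty, mul_one]
    ext n
    rw [cs, coeff_mk, coeff_one]
    split_ifs with h
    · subst h
      have : SA ∅ 0 = {0} := by
        ext m
        constructor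
        · rintro ⟨h1, h2⟩
          exact Multiset.eq_zero_of_forall_notMem fun x hx => absurd (h1 x hx) (by simp)
        · rintro rfl
          exact ⟨by simp, by simp⟩
      rw [this]; simp
    · have : SA ∅ n = ∅ := by
        ext m
        simp only [Set.mem_empty_iff_false, iff_false]
        rintro ⟨h1, h2⟩
        have : m = 0 := Multiset.eq_zero_of_forall_notMem fun x hx => absurd (h1 x hx) (by simp)
        subst this
        simp at h2
        omega
      rw [this]; simp
  | insert a B ha ih =>
    rw [Finset.prod_insert ha]
    have h1 := cs_insert B a ha h0
    have h2 := ih (fun h => h0 (Finset.mem_insert_of_mem h))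
    linear_combination (∏ a ∈ B, (1 - X ^ a : FF⟦X⟧)) * h1 + h2

theorem sPart_le_iff (m : Multiset ℕ) (a : ℕ) : (a : ℕ∞) ≤ sPart m ↔ ∀ x ∈ m, a ≤ x := by
  unfold sPart
  rw [Multiset.le_inf]
  simp

theorem sPart_le_mem (m : Multiset ℕ) (s : ℕ) (h : s ∈ m) : sPart m ≤ (s : ℕ∞) := by
  unfold sPart
  apply Multiset.inf_le
  simp [h]

theorem sPart_mem (m : Multiset ℕ) (h : m ≠ 0) : ∃ s ∈ m, sPart m = (s : ℕ∞) := by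
  have hne : m.toFinset.Nonempty := by
    rw [Finset.nonempty_iff_ne_empty]; simpa using h
  refine ⟨m.toFinset.min' hne, Multiset.mem_toFinset.mp (Finset.min'_mem _ _), ?_⟩
  apply le_antisymm
  · exact sPart_le_mem _ _ (Multiset.mem_toFinset.mp (Finset.min'_mem _ hne))
  · rw [sPart_le_iff]
    intro x hx
    exact Finset.min'_le _ _ (Multiset.mem_toFinset.mpr hx)

theorem lPart_lt_iff (m : Multiset ℕ) (a : ℕ) (ha : 0 < a) : lPart m < a ↔ ∀ x ∈ m, x < a := by
  unfold lPart
  constructor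
  · intro h x hx
    exact lt_of_le_of_lt (Multiset.le_sup hx) h
  · intro h
    have : m.sup ≤ a - 1 := Multiset.sup_le.mpr fun x hx => by have := h x hx; omega
    omega

/-- the decomposition of the set of pairs -/
theorem ST_decomp (n M : ℕ) (h : n < M) :
    {p : Multiset ℕ × Multiset ℕ | InST p ∧ p.1.sum + p.2.sum = n} =
    ⋃ t ∈ (Finset.Ico 1 M ×ˢ Finset.HasAntidiagonal.antidiagonal n : Finset (ℕ × (ℕ × ℕ))),
      DA (Finset.Ico t.1 M) t.1 t.2.1 ×ˢ SA (Finset.Ico t.1 (2 * t.1)) t.2.2 := by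
  ext ⟨p, r⟩
  simp only [Set.mem_ofPred_eq, Set.mem_iUnion, Set.mem_prod, exists_prop]
  constructor
  · rintro ⟨⟨h1, h2, h3, h4, h5⟩, h6⟩
    simp only at *
    obtain ⟨s, hs, hse⟩ := sPart_mem p h3
    have hs0 := h1 s hs
    have hmin := (sPart_le_iff p s).mp hse.ge
    rw [hse] at h4 h5
    rw [sPart_le_iff] at h4
    have h5' : lPart r < 2 * s := by exact_mod_cast h5
    rw [lPart_lt_iff _ _ (by omega)] at h5'
    have hle : ∀ x ∈ p, x < M := fun x hx => by
      have := Multiset.le_sum_of_mem hx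
      omega
    refine ⟨(s, (p.sum, r.sum)), ?_, ⟨hs, fun x hx => ?_, rfl⟩, ⟨fun x hx => ?_, rfl⟩⟩
    · rw [Finset.mem_product, Finset.mem_Ico, Finset.HasAntidiagonal.mem_antidiagonal]
      exact ⟨⟨hs0, hle s hs⟩, h6⟩
    · exact Finset.mem_Ico.mpr ⟨hmin x hx, hle x hx⟩
    · exact Finset.mem_Ico.mpr ⟨h4 x hx, h5' x hx⟩
  · rintro ⟨⟨s, i, j⟩, ht, ⟨h1, h2, h3⟩, ⟨h4, h5⟩⟩
    rw [Finset.mem_product, Finset.mem_Ico, Finset.HasAntidiagonal.mem_antidiagonal] at ht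
    simp only [Finset.mem_Ico] at *
    have hse : sPart p = (s : ℕ∞) := by
      apply le_antisymm
      · exact sPart_le_mem _ _ h1
      · rw [sPart_le_iff]
        exact fun x hx => (h2 x hx).1
    refine ⟨⟨fun x hx => ?_, fun x hx => ?_, ?_, ?_, ?_⟩, ?_⟩
    · have := h2 x hx; omega
    · have := h4 x hx; omega
    · rintro rfl; simp at h1
    · rw [hse, sPart_le_iff]; exact fun x hx => (h4 x hx).1
    · rw [hse]
      have : lPart r < 2 * s := (lPart_lt_iff _ _ (by omega)).mpr fun x hx => (h4 x hx).2
      exact_mod_cast this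
    · rw [h3, h5]; exact ht.2

theorem ncard_biU {ι α : Type*} [DecidableEq ι] (T : Finset ι) (f : ι → Set α)
    (hf : ∀ t ∈ T, (f t).Finite) (hd : ∀ t ∈ T, ∀ u ∈ T, t ≠ u → Disjoint (f t) (f u)) :
    (⋃ t ∈ T, f t).ncard = ∑ t ∈ T, (f t).ncard := by
  induction T using Finset.induction_on with
  | empty => simp
  | insert a T ha ih =>
    have hfT : (⋃ t ∈ T, f t).Finite :=
      T.finite_toSet.biUnion fun t ht => hf t (Finset.mem_insert_of_mem ht)
    have hdT : Disjoint (f a) (⋃ t ∈ T, f t) := by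
      rw [Set.disjoint_iUnion₂_right]
      intro t ht
      exact hd a (Finset.mem_insert_self _ _) t (Finset.mem_insert_of_mem ht)
        (fun h => ha (h ▸ ht))
    rw [Finset.set_biUnion_insert, Finset.sum_insert ha,
      Set.ncard_union_eq hdT (hf a (Finset.mem_insert_self _ _)) hfT, ih]
    · exact fun t ht => hf t (Finset.mem_insert_of_mem ht)
    · exact fun t ht u hu => hd t (Finset.mem_insert_of_mem ht) u (Finset.mem_insert_of_mem hu)

theorem Ico0 {s M : ℕ} (hs : 1 ≤ s) : 0 ∉ Finset.Ico s M := by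
  rw [Finset.mem_Ico]; omega

theorem sT_count (n M : ℕ) (h : n < M) :
    sT n = ∑ s ∈ Finset.Ico 1 M, ∑ t ∈ Finset.HasAntidiagonal.antidiagonal n,
      (DA (Finset.Ico s M) s t.1).ncard * (SA (Finset.Ico s (2 * s)) t.2).ncard := by
  classical
  unfold sT
  rw [ST_decomp n M h, ncard_biU, Finset.sum_product]
  · simp only [Set.ncard_prod]
  · rintro ⟨s, i, j⟩ ht
    rw [Finset.mem_product, Finset.mem_Ico] at ht
    exact (DA_fin _ (Ico0 ht.1.1) _ _).prod (SA_fin _ (Ico0 ht.1.1) _)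
  · rintro ⟨s, i, j⟩ ht ⟨s', i', j'⟩ ht' hne
    rw [Set.disjoint_left]
    rintro ⟨p, r⟩ ⟨⟨h1, h2, h3⟩, ⟨h4, h5⟩⟩ ⟨⟨h1', h2', h3'⟩, ⟨h4', h5'⟩⟩
    apply hne
    simp only [Finset.mem_Ico] at *
    have a := (h2 _ h1').1
    have b := (h2' _ h1).1
    obtain rfl : s = s' := by omega
    subst h3 h5
    subst h3' h5'
    rfl

def GF : FF⟦X⟧ := mk fun n => (sT n : FF)

theorem GF_cong (M : ℕ) : ph M GF = ph M (∑ s ∈ Finset.Ico 1 M,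
    X ^ s * cs (Finset.Ico s M) * cs (Finset.Ico s (2 * s))) := by
  rw [ph_coeff]
  intro n hn
  rw [GF, coeff_mk, map_sum, sT_count n M hn, Nat.cast_sum]
  refine Finset.sum_congr rfl fun s hs => ?_
  rw [Finset.mem_Ico] at hs
  rw [← DA_gf _ s (Finset.mem_Ico.mpr ⟨le_refl _, hs.2⟩), coeff_mul, Nat.cast_sum]
  refine Finset.sum_congr rfl fun t _ => ?_
  rw [cs, coeff_mk, coeff_mk, Nat.cast_mul]

theorem prod_Ico (a b : ℕ) (h : a ≤ b) :
    qp a * ∏ i ∈ Finset.Ico (a + 1) (b + 1), (1 - X ^ i : FF⟦X⟧) = qp b := by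
  induction b, h using Nat.le_induction with
  | base => simp
  | succ b hb ih =>
    rw [Finset.prod_Ico_succ_top (by omega), ← mul_assoc, ih, qp_succ]

theorem cs_Ico (a b : ℕ) (h : a ≤ b) : cs (Finset.Ico (a + 1) (b + 1)) = qp a * iq b := by
  have h1 := cs_prod (Finset.Ico (a + 1) (b + 1)) (Ico0 (by omega))
  have h2 := prod_Ico a b h
  have h3 := qp_iq b
  rw [← h2] at h3
  linear_combination (qp a * iq b) * h1 - (cs (Finset.Ico (a + 1) (b + 1))) * h3

theorem GF_val (M : ℕ) : ph M (PP * GF) = ph M (Fsum M) := by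
  rcases M with _ | M
  · rw [ph_eq]; simp
  rw [map_mul, GF_cong, ← map_mul, Finset.mul_sum, Fsum, Finset.sum_Ico_eq_sum_range,
    Finset.sum_range_succ, map_add, map_sum, map_sum, Nat.add_sub_cancel, mul_assoc (X ^ (M + 1)),
    map_mul _ (X ^ (M + 1)), ph_X (le_refl _), zero_mul, add_zero]
  refine Finset.sum_congr rfl fun N hN => ?_
  rw [Finset.mem_range] at hN
  have e1 : cs (Finset.Ico (1 + N) (M + 1)) = qp N * iq M := by
    rw [add_comm 1 N]; exact cs_Ico N M (by omega)
  have e2 : cs (Finset.Ico (1 + N) (2 * (1 + N))) = qp N * iq (2 * N + 1) := by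
    rw [← cs_Ico N (2 * N + 1) (by omega)]
    congr 2
    · ring
    · ring
  rw [e1, e2, add_comm 1 N]
  have e3 : ph (M + 1) (PP * iq M) = 1 := by
    rw [map_mul, ph_iq (le_refl _), ← map_mul, PP_inv, map_one]
  have e4 : PP * (X ^ (N + 1) * (qp N * iq M) * (qp N * iq (2 * N + 1))) =
      (PP * iq M) * (X ^ (N + 1) * qp N ^ 2 * iq (2 * N + 1)) := by ring
  rw [e4, map_mul, e3, one_mul]

/-! part Fin -/

theorem gs_of_ph {ι : Type*} (E : ι → ℕ) (w : ι → FF) (f : FF⟦X⟧) (S : ℕ → Finset ι)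
    (hS : ∀ n i, E i = n → i ∈ S n)
    (h : ∀ n, coeff n f = coeff n (∑ i ∈ S n, C (w i) * X ^ (E i))) :
    f = gs (fun i => (E i : ℤ)) w := by
  ext n
  rw [h n, coeff_gs, finsum_eq_sum_of_support_subset (s := S n), map_sum]
  · refine Finset.sum_congr rfl fun i _ => ?_
    rw [coeff_C_mul, coeff_X_pow]
    by_cases hi : E i = n
    · rw [if_pos hi.symm, if_pos (by exact_mod_cast hi), mul_one]
    · rw [if_neg (fun h => hi h.symm), if_neg (by exact_mod_cast hi), mul_zero]
  · intro i hi
    rw [Function.mem_support] at hi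
    have : (E i : ℤ) = n := by
      by_contra h'; rw [if_neg h'] at hi; exact hi rfl
    exact hS n i (by exact_mod_cast this)

theorem gs_shift {ι : Type*} (E : ι → ℕ) (w : ι → FF) (a : ℕ) :
    X ^ a * expand 24 (by norm_num) (gs (fun i => (E i : ℤ)) w) =
      gs (fun i => ((24 * E i + a : ℕ) : ℤ)) w := by
  ext n
  rw [coeff_X_pow_mul', coeff_gs]
  split_ifs with h
  · rw [coeff_expand]
    split_ifs with h2
    · rw [coeff_gs]
      refine finsum_congr fun i => ?_
      have : ((E i : ℤ) = ((n - a) / 24 : ℕ)) ↔ (((24 * E i + a : ℕ) : ℤ) = n) := by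
        rw [Nat.cast_inj, Nat.cast_inj]; omega
      by_cases hi : (E i : ℤ) = ((n - a) / 24 : ℕ)
      · rw [if_pos hi, if_pos (this.mp hi)]
      · rw [if_neg hi, if_neg (fun h => hi (this.mpr h))]
    · symm
      refine finsum_eq_zero_of_forall_eq_zero fun i => if_neg ?_
      rw [Nat.cast_inj]; omega
  · symm
    refine finsum_eq_zero_of_forall_eq_zero fun i => if_neg ?_
    rw [Nat.cast_inj]; omega

theorem fold {ι κ : Type*} (σ : ι → ι) (hσ : Function.Involutive σ) (e : κ → ι)
    (he : Function.Injective e) (E : ι → ℤ) (w : ι → FF) (hA : Adm E w)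
    (hE : ∀ x, E (σ x) = E x) (hw : ∀ x, w (σ x) = w x)
    (hs : ∀ x, w x ≠ 0 → ∃ k, e k = x ∨ e k = σ x) (hd : ∀ k l, e k ≠ σ (e l)) :
    gs E w = C 2 * gs (fun k => E (e k)) (fun k => w (e k)) := by
  classical
  set w1 : ι → FF := fun x => if x ∈ Set.range e then w x else 0 with hw1
  set w2 : ι → FF := fun x => w1 (σ x) with hw2
  have hsplit : w = fun x => w1 x + w2 x := by
    ext x
    simp only [hw1, hw2]
    by_cases h1 : x ∈ Set.range e
    · have h2 : σ x ∉ Set.range e := by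
        rintro ⟨k, hk⟩
        obtain ⟨l, rfl⟩ := h1
        exact hd k l hk
      rw [if_pos h1, if_neg h2, add_zero]
    · rw [if_neg h1, zero_add]
      by_cases h2 : σ x ∈ Set.range e
      · rw [if_pos h2, hw]
      · rw [if_neg h2]
        by_contra h
        obtain ⟨k, hk | hk⟩ := hs x h
        · exact h1 ⟨k, hk⟩
        · exact h2 ⟨k, hk⟩
  have hA1 : Adm E w1 := hA.mono fun i hi => by
    intro h0
    apply hi
    simp [hw1, h0]
  have hA2 : Adm E w2 := hA.mono fun i hi => by
    by_cases h : σ i ∈ Set.range e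
    · have : w (σ i) ≠ 0 := by
        simp only [hw2, hw1] at hi
        rwa [if_pos h] at hi
      rwa [hw] at this
    · simp only [hw2, hw1] at hi
      rw [if_neg h] at hi; exact absurd rfl hi
  have e2 : gs E w2 = gs E w1 := by
    ext n
    rw [coeff_gs, coeff_gs, ← finsum_comp_equiv (hσ.toPerm σ)]
    refine finsum_congr fun i => ?_
    simp only [Function.Involutive.coe_toPerm, hE, hw2, hσ i]
  have e1 : gs E w1 = gs (fun k => E (e k)) (fun k => w (e k)) := by
    rw [gs_inj e he E w1]
    · congr 1
      ext k
      simp [hw1]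
    · intro i hi
      by_contra h
      simp only [hw1] at hi
      rw [if_neg h] at hi; exact hi rfl
  conv_lhs => rw [hsplit]
  rw [gs_add hA1 hA2, e2, e1]
  have : (C (2 : FF) : FF⟦X⟧) = 2 := map_ofNat C 2
  rw [this]; ring

theorem c4_odd (i : ℕ) : c4 (2 * i + 1) = (-1) ^ i := by
  induction i with
  | zero => decide
  | succ i ih =>
    rw [c4_flip (y := 2 * i + 1) 0 (by push_cast; ring), ih, pow_succ]; ring

theorem c12_pent (k : ℤ) : c12 (6 * k - 1) = ((Int.negOnePow k : ℤ) : FF) := by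
  have h3 : c3 (6 * k - 1) = -1 := by
    rw [c3_same (y := -1) (2 * k) (by ring)]; decide
  unfold c12
  rw [h3]
  rcases Int.even_or_odd k with h | h
  · rw [Int.negOnePow_even k h]
    obtain ⟨t, rfl⟩ := h
    rw [c4_same (y := -1) (3 * t) (by ring)]; decide
  · rw [Int.negOnePow_odd k h]
    obtain ⟨t, rfl⟩ := h
    rw [c4_same (y := 1) (3 * t + 1) (by ring)]; decide

theorem PP_gs : PP = gs (fun k : ℤ => (pentagonal k : ℤ)) (fun k => c12 (6 * k - 1)) := by
  ext n
  rw [coeff_gs]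
  by_cases h : n ∈ Set.range pentagonal
  · obtain ⟨k, rfl⟩ := h
    rw [PP, coeff_pentagonalSeries_pentagonal, finsum_eq_single _ k, if_pos rfl, c12_pent]
    intro x hx
    rw [if_neg]
    rw [Nat.cast_inj]
    exact fun h => hx (pentagonal_injective h)
  · rw [PP, coeff_pentagonalSeries_eq_zero _ h]
    symm
    refine finsum_eq_zero_of_forall_eq_zero fun i => if_neg ?_
    rw [Nat.cast_inj]
    exact fun h' => h ⟨i, h'⟩

def theta : FF⟦X⟧ := X * expand 24 (by norm_num) PP

theorem TH_theta : TH = C 2 * theta := by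
  unfold TH
  rw [fold (fun x : ℤ => -x) neg_involutive (fun k : ℤ => 6 * k - 1)]
  · unfold theta
    rw [PP_gs]
    have := gs_shift pentagonal (fun k => c12 (6 * k - 1)) 1
    rw [pow_one] at this
    rw [this]
    congr 2
    ext k
    have h := two_mul_natCast_pentagonal k
    push_cast
    linear_combination -12 * h
  · intro x y h
    simp only at h; omega
  · exact Adm_sq _
  · intro x; ring
  · exact c12_neg
  · intro x hx
    obtain ⟨h1, h2⟩ := c12_ne hx
    rcases (show x % 6 = 5 ∨ x % 6 = 1 by omega) with h | h
    · exact ⟨(x + 1) / 6, Or.inl (by omega)⟩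
    · exact ⟨(-x + 1) / 6, Or.inr (by omega)⟩
  · intro k l; omega

theorem PP3_gs : PP ^ 3 = gs (fun i : ℕ => (TT i : ℤ)) (fun i => (2 * (i : FF) + 1) * (-1) ^ i) := by
  refine gs_of_ph TT _ _ (fun n => Finset.range (n + 1)) ?_ ?_
  · intro n i h
    have := le_TT i
    rw [Finset.mem_range]; omega
  · intro n
    have := ph_coeff.mp (jac n) n (by omega)
    rw [this]
    congr 1
    refine Finset.sum_congr rfl fun i _ => ?_
    simp only [map_mul, map_add, map_pow, map_neg, map_one, map_natCast, map_ofNat]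
    ring

theorem J2_theta : J2 = C 2 * theta ^ 3 := by
  unfold J2
  rw [fold (fun x : ℤ => -x) neg_involutive (fun k : ℕ => 2 * (k : ℤ) + 1)]
  · unfold theta
    rw [mul_pow, ← map_pow, PP3_gs, gs_shift]
    congr 2
    · ext k
      have h := two_TT k
      push_cast
      zify at h
      linear_combination -12 * h
    · ext k
      rw [c4_odd]; push_cast; ring
  · intro x y h
    simp only at h; omega
  · exact Adm_3sq _
  · intro x; ring
  · intro x; rw [c4_neg]; push_cast; ring
  · intro x hx
    have h1 := c4_ne (left_ne_zero_of_mul hx)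
    rcases (show 0 ≤ x ∨ x < 0 by omega) with h | h
    · exact ⟨((x - 1) / 2).toNat, Or.inl (by omega)⟩
    · exact ⟨((-x - 1) / 2).toNat, Or.inr (by omega)⟩
  · intro k l; omega

def EX (p : ℕ × ℕ) : ℕ := TT p.1 + (p.1 + 1) + (TT p.2 + (2 * p.1 + 1) * p.2)

theorem HH_gs : PP ^ 3 * GF = gs (fun p : ℕ × ℕ => (EX p : ℤ))
    (fun p => (2 * (p.1 : FF) + 1) * ((-1) ^ p.1 * (-1) ^ p.2)) := by
  refine gs_of_ph EX _ _ (fun n => Finset.range (n + 1) ×ˢ Finset.range (n + 1)) ?_ ?_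
  · rintro n ⟨i, j⟩ h
    have h1 := le_TT i
    have h2 := le_TT j
    rw [Finset.mem_product, Finset.mem_range, Finset.mem_range]
    simp only [EX] at *
    constructor
    · omega
    · have : 0 ≤ (2 * i + 1) * j := Nat.zero_le _
      omega
  · intro n
    have h1 : ph (n + 1) (PP ^ 3 * GF) = ph (n + 1) (PP ^ 2 * Fsum (n + 1)) := by
      rw [map_mul _ (PP ^ 2), ← GF_val, ← map_mul]
      congr 1; ring
    have := ph_coeff.mp (h1.trans (Fsum_val (n + 1))) n (by omega)
    rw [this, Finset.sum_product]
    congr 1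
    refine Finset.sum_congr rfl fun i _ => Finset.sum_congr rfl fun j _ => ?_
    simp only [map_mul, map_add, map_pow, map_neg, map_one, map_natCast, map_ofNat, EX]
    ring

theorem H4_theta : theta ^ 3 * expand 24 (by norm_num) GF = X ^ 9 * H4 := by
  have h1 : theta ^ 3 * expand 24 (by norm_num) GF = X ^ 3 * expand 24 (by norm_num) (PP ^ 3 * GF) := by
    unfold theta
    rw [map_mul, map_pow]; ring
  have h2 : H4 = gs (fun p : ℕ × ℕ => ((24 * (EX p - 1) + 18 : ℕ) : ℤ))
    (fun p => (2 * (p.1 : FF) + 1) * ((-1) ^ p.1 * (-1) ^ p.2)) := by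
    unfold H4
    rw [fold (fun x : ℤ × ℤ => -x) neg_involutive
      (fun k : ℕ × ℕ => (2 * (k.1 : ℤ) + 1 + 2 * (2 * (k.2 : ℤ) + 1), 2 * (k.2 : ℤ) + 1))]
    · rw [← gs_smul]
      congr 1
      · ext ⟨i, j⟩
        have h1 := two_TT i
        have h2 := two_TT j
        have h3 : EX (i, j) - 1 = TT i + i + (TT j + (2 * i + 1) * j) := by
          simp only [EX]; omega
        rw [h3]
        simp only [EH]
        push_cast
        zify at h1 h2
        linear_combination -12 * h1 - 12 * h2
      · ext ⟨i, j⟩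
        simp only [wH]
        have e1 : 2 * (i : ℤ) + 1 + 2 * (2 * j + 1) - 2 * (2 * j + 1) = 2 * i + 1 := by ring
        have e2 : c4 (2 * (i : ℤ) + 1 + 2 * (2 * j + 1)) = - (-1) ^ i := by
          rw [c4_flip (y := 2 * i + 1) j (by ring), c4_odd]
        rw [e1, e2, c4_odd, sg_pos (by omega), sg_pos (by omega)]
        push_cast
        have h5 : (5 : FF) = 0 := by decide
        linear_combination (- (2 * (i : FF) + 1) * ((-1) ^ i * (-1) ^ j)) * h5
    · rintro ⟨x, y⟩ ⟨x', y'⟩ h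
      simp only [Prod.mk.injEq] at h ⊢
      omega
    · exact Adm_H
    · rintro ⟨b, d⟩; simp only [EH, Prod.fst_neg, Prod.snd_neg]; ring
    · rintro ⟨b, d⟩
      simp only [wH, Prod.fst_neg, Prod.snd_neg]
      have : -b - 2 * -d = -(b - 2 * d) := by ring
      rw [this, c4_neg, c4_neg, sg_neg, sg_neg]
      push_cast; ring
    · rintro ⟨b, d⟩ hx
      have hk := wH_key hx
      unfold wH at hx
      have h1 := left_ne_zero_of_mul hx
      have hb := c4_ne (left_ne_zero_of_mul h1)
      have hd := c4_ne (right_ne_zero_of_mul h1)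
      simp only at hk hb hd
      rcases hk with ⟨h1, h2⟩ | ⟨h1, h2⟩
      · refine ⟨(((b - 2 * d - 1) / 2).toNat, ((d - 1) / 2).toNat), Or.inl ?_⟩
        simp only [Prod.mk.injEq]; omega
      · refine ⟨(((-(b - 2 * d) - 1) / 2).toNat, ((-d - 1) / 2).toNat), Or.inr ?_⟩
        simp only [Prod.neg_mk, Prod.mk.injEq]; omega
    · rintro ⟨i, j⟩ ⟨i', j'⟩ h
      simp only [Prod.neg_mk, Prod.mk.injEq] at h
      omega
  rw [h1, HH_gs, gs_shift, h2]
  ext n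
  rw [coeff_X_pow_mul', coeff_gs]
  split_ifs with h
  · rw [coeff_gs]
    refine finsum_congr fun p => ?_
    have hp : 1 ≤ EX p := by unfold EX; omega
    by_cases hi : ((24 * EX p + 3 : ℕ) : ℤ) = n
    · rw [if_pos hi, if_pos]
      rw [Nat.cast_inj] at hi ⊢; omega
    · rw [if_neg hi, if_neg]
      rw [Nat.cast_inj] at hi ⊢; omega
  · refine finsum_eq_zero_of_forall_eq_zero fun p => if_neg ?_
    have hp : 1 ≤ EX p := by unfold EX; omega
    rw [Nat.cast_inj]; omega

theorem theta_ne : theta ≠ 0 := by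
  intro h
  have := congrArg (coeff 1) h
  unfold theta at this
  rw [← pow_one X, coeff_X_pow_mul', if_pos (le_refl 1), map_zero, Nat.sub_self,
    coeff_zero_eq_constantCoeff, constantCoeff_expand, PP_const] at this
  exact one_ne_zero this

theorem sT_five_n_plus_three_mod_five (n : ℕ) : 5 ∣ sT (5 * n + 3) := by
  have h := elim theta (expand 24 (by norm_num) GF) theta_ne TH_theta J2_theta H4_theta
    (24 * (5 * n + 3)) (by
      have h5 : (5 : FF) = 0 := by decide
      push_cast
      linear_combination (24 * (n : FF) + 14) * h5)
  rw [coeff_expand_mul, GF, coeff_mk] at h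
  exact (ZMod.natCast_eq_zero_iff _ _).mp h
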